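/- Let k ≥ 3 be an integer with k ∉ {4,5}. For all sufficiently large n, if G is an n-vertex W_{2k+1}-free simple graph attaining the maximum spectral radius among all n-vertex W_{2k+1}-free graphs, V(G) = L ⊔ R is a maximum cut of G, and L contains a vertex of internal degree k − 1, then every vertex of L is adjacent to every vertex of R; that is, the number of edges between L and R equals |L|·|R|. -/

import Mathlib

/-- The wheel graph on `t` vertices: vertex `0` joined to every vertex of the
cycle `1, 2, …, t-1` (with `t-1` adjacent to `1`). -/
def wheelGraph (t : ℕ) : SimpleGraph (Fin t) where
  Adj a b := a ≠ b ∧ (a.val = 0 ∨ b.val = 0 ∨ a.val + 1 = b.val ∨ b.val + 1 = a.val ∨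
      (a.val = 1 ∧ b.val = t - 1) ∨ (b.val = 1 ∧ a.val = t - 1))
  symm := by
    constructor
    intro a b h
    exact ⟨h.1.symm, by tauto⟩
  loopless := by
    constructor
    intro a h
    exact h.1 rfl

/-- `G` contains a copy of `F`, i.e. a subgraph isomorphic to `F`. -/
def ContainsCopy {α β : Type*} (F : SimpleGraph α) (G : SimpleGraph β) : Prop :=
  ∃ f : α ↪ β, ∀ a b, F.Adj a b → G.Adj (f a) (f b)

/-- `G` is `W_t`-free: it contains no subgraph isomorphic to the wheel on `t` vertices. -/
def WheelFree (t : ℕ) {n : ℕ} (G : SimpleGraph (Fin n)) : Prop :=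
  ¬ ContainsCopy (wheelGraph t) G

/-- The spectral radius of `G`: the largest eigenvalue of its adjacency matrix. -/
noncomputable def lam1 {n : ℕ} (G : SimpleGraph (Fin n)) : ℝ := by
  classical
  exact sSup {μ : ℝ | Module.End.HasEigenvalue (Matrix.toLin' (G.adjMatrix ℝ)) μ}

/-- The number of edges of a graph on a finite vertex type. -/
noncomputable def edgeCount {V : Type*} [Fintype V] (G : SimpleGraph V) : ℕ := by
  classical
  exact G.edgeFinset.card

/-- The degree of a vertex. -/
noncomputable def deg {n : ℕ} (G : SimpleGraph (Fin n)) (v : Fin n) : ℕ := by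
  classical
  exact G.degree v

/-- The number of neighbours of `v` inside the set `A`. -/
noncomputable def degIn {n : ℕ} (G : SimpleGraph (Fin n)) (A : Finset (Fin n)) (v : Fin n) : ℕ := by
  classical
  exact (A.filter fun u => G.Adj v u).card

/-- The number of edges of `G` with one endpoint in `S` and the other outside `S`. -/
noncomputable def cutCount {n : ℕ} (G : SimpleGraph (Fin n)) (S : Finset (Fin n)) : ℕ := by
  classical
  exact ((Finset.univ : Finset (Fin n × Fin n)).filter
    fun p => G.Adj p.1 p.2 ∧ p.1 ∈ S ∧ p.2 ∉ S).card

/-- `(S, T)` is a maximum cut of `G`. -/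
def IsMaxCut {n : ℕ} (G : SimpleGraph (Fin n)) (S T : Finset (Fin n)) : Prop :=
  T = Sᶜ ∧ ∀ S' : Finset (Fin n), cutCount G S' ≤ cutCount G S

/-- `G` attains the maximum spectral radius among all `n`-vertex `W_t`-free graphs. -/
def IsSpexWheel (t : ℕ) {n : ℕ} (G : SimpleGraph (Fin n)) : Prop :=
  WheelFree t G ∧ ∀ H : SimpleGraph (Fin n), WheelFree t H → lam1 H ≤ lam1 G

/-- `G` attains the maximum number of edges among all `n`-vertex `W_t`-free graphs. -/
def IsExWheel (t : ℕ) {n : ℕ} (G : SimpleGraph (Fin n)) : Prop :=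
  WheelFree t G ∧ ∀ H : SimpleGraph (Fin n), WheelFree t H → edgeCount H ≤ edgeCount G



open Classical in
/-- A list describing the rim, together with a centre, gives a copy of the wheel. -/
lemma copy_of_list {V : Type*} {G : SimpleGraph V} {k : ℕ} (hk : 2 ≤ k) (c : V) (l : List V)
    (hlen : l.length = 2 * k) (hnd : l.Nodup) (hch : l.IsChain G.Adj)
    (hcl : ∀ a ∈ l.getLast?, ∀ b ∈ l.head?, G.Adj a b)
    (hc : ∀ x ∈ l, G.Adj c x) : ContainsCopy (wheelGraph (2 * k + 1)) G := by
  have hget : ∀ a : Fin (2 * k + 1), a.val ≠ 0 → a.val - 1 < l.length := by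
    intro a ha; have := a.2; omega
  have hcl' : G.Adj (l[2 * k - 1]'(by omega)) (l[0]'(by omega)) := by
    apply hcl
    · simp only [List.getLast?_eq_getElem?, Option.mem_def, hlen]
      exact List.getElem?_eq_getElem _
    · rw [List.head?_eq_getElem?, Option.mem_def, List.getElem?_eq_getElem]
  have hch' : ∀ (i : ℕ) (h : i + 1 < l.length), G.Adj l[i] l[i + 1] := by
    intro i h
    exact List.isChain_iff_getElem.1 hch i h
  let φ : Fin (2 * k + 1) → V := fun a => if h : a.val = 0 then c else l[a.val - 1]'(hget a h)
  have hφ0 : ∀ a, a.val = 0 → φ a = c := by intro a h; simp only [φ, h, dif_pos]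
  have hφ1 : ∀ a (h : a.val ≠ 0), φ a = l[a.val - 1]'(hget a h) := by
    intro a h; simp only [φ, h, dif_neg, not_false_iff]
  have hadj : ∀ a b, (wheelGraph (2 * k + 1)).Adj a b → G.Adj (φ a) (φ b) := by
    have key : ∀ a b : Fin (2 * k + 1), a.val + 1 = b.val → a.val ≠ 0 → G.Adj (φ a) (φ b) := by
      intro a b h h0
      rw [hφ1 a h0, hφ1 b (by omega)]
      have := hch' (a.val - 1) (by have := b.2; omega)
      convert this using 2
      omega
    have key0 : ∀ a b : Fin (2 * k + 1), a.val = 0 → a ≠ b → G.Adj (φ a) (φ b) := by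
      intro a b h h0
      have hb : b.val ≠ 0 := by
        intro hb; apply h0; ext; omega
      rw [hφ0 a h, hφ1 b hb]
      exact hc _ (List.getElem_mem _)
    have key2 : ∀ a b : Fin (2 * k + 1), a.val = 1 → b.val = 2 * k → G.Adj (φ a) (φ b) := by
      intro a b h h'
      rw [hφ1 a (by omega), hφ1 b (by omega)]
      have := hcl'.symm
      convert this using 2
      · omega
      · omega
    intro a b ⟨hne, h⟩
    by_cases ha : a.val = 0
    · exact key0 a b ha hne
    by_cases hb : b.val = 0
    · exact (key0 b a hb hne.symm).symm
    rcases h with h | h | h | h | h | h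
    · exact absurd h ha
    · exact absurd h hb
    · exact key a b h ha
    · exact (key b a h hb).symm
    · exact key2 a b h.1 (by omega)
    · exact (key2 b a h.1 (by omega)).symm
  refine ⟨⟨φ, ?_⟩, hadj⟩
  intro a b hab
  by_contra hne
  by_cases ha : a.val = 0
  · have := hadj a b ⟨hne, Or.inl ha⟩
    rw [hab] at this; exact G.loopless.irrefl _ this
  by_cases hb : b.val = 0
  · have := hadj a b ⟨hne, Or.inr (Or.inl hb)⟩
    rw [hab] at this; exact G.loopless.irrefl _ this
  rw [hφ1 a ha, hφ1 b hb] at hab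
  have := (List.Nodup.getElem_inj_iff hnd).1 hab
  apply hne; ext; omega

lemma cyc_of_copy {V : Type*} {G : SimpleGraph V} {k : ℕ} (hk : 2 ≤ k)
    (h : ContainsCopy (wheelGraph (2 * k + 1)) G) :
    ∃ c, ∃ f : ZMod (2 * k) → V, Function.Injective f ∧ (∀ i, G.Adj (f i) (f (i + 1))) ∧
      ∀ i, G.Adj c (f i) := by
  obtain ⟨φ, hφ⟩ := h
  have : NeZero (2 * k) := ⟨by omega⟩
  have : Fact (1 < 2 * k) := ⟨by omega⟩
  refine ⟨φ ⟨0, by omega⟩, fun i => φ ⟨i.val + 1, by have := ZMod.val_lt i; omega⟩, ?_, ?_, ?_⟩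
  · intro i j hij
    have := φ.injective hij
    simp only [Fin.mk.injEq, add_left_inj] at this
    exact ZMod.val_injective _ this
  · intro i
    apply hφ
    have hlt := ZMod.val_lt i
    have hv : (i + 1).val = (i.val + 1) % (2 * k) := by
      rw [ZMod.val_add, ZMod.val_one]
    by_cases h : i.val + 1 < 2 * k
    · rw [Nat.mod_eq_of_lt h] at hv
      refine ⟨?_, ?_⟩
      · simp [Fin.ext_iff, hv]
      · simp [hv]
    · have h2 : i.val + 1 = 2 * k := by omega
      rw [h2, Nat.mod_self] at hv
      refine ⟨?_, ?_⟩
      · simp only [ne_eq, Fin.ext_iff]; omega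
      · right; right; right; right; right
        exact ⟨by simp [hv], by simp [h2]⟩
  · intro i
    apply hφ
    refine ⟨?_, Or.inl rfl⟩
    simp [Fin.ext_iff]

/-- Extending a path by a zigzag. -/
lemma zigzag {V : Type*} [DecidableEq V] {G : SimpleGraph V} (X : Finset V) :
    ∀ (As P : List V), P ≠ [] → P.Nodup → P.IsChain G.Adj → (∀ a ∈ P.getLast?, a ∈ X) →
      (∀ a ∈ As, a ∉ P) → As.Nodup → (∀ a ∈ As, ∀ x ∈ X, G.Adj a x) →
      P.length + 2 * As.length ≤ X.card →
      ∃ Q : List V, (P ++ Q).Nodup ∧ (P ++ Q).IsChain G.Adj ∧ Q.length = 2 * As.length ∧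
        (∀ a ∈ (P ++ Q).getLast?, a ∈ X) ∧ (∀ q ∈ Q, q ∈ As ∨ q ∈ X) := by
  intro As
  induction As with
  | nil =>
    intro P _ hnd hch hl _ _ _ _
    exact ⟨[], by simpa using hnd, by simpa using hch, rfl, by simpa using hl, by simp⟩
  | cons a As ih =>
    intro P hne hnd hch hl hd hAnd hadj hcard
    simp only [List.length_cons] at hcard
    obtain ⟨s, hsX, hsP⟩ : ∃ s ∈ X, s ∉ P := by
      by_contra hcon
      push Not at hcon
      have : X ⊆ P.toFinset := fun x hx => List.mem_toFinset.2 (hcon x hx)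
      have h1 := Finset.card_le_card this
      have h2 := List.toFinset_card_le P
      omega
    have hAX : ∀ b ∈ a :: As, b ∉ X := fun b hb hbX => G.loopless.irrefl _ (hadj b hb b hbX)
    have haP : a ∉ P := hd a (by simp)
    have has : G.Adj a s := hadj a (by simp) s hsX
    have hAs : ∀ b ∈ As, b ≠ a := by
      intro b hb hba; subst hba; exact (List.nodup_cons.1 hAnd).1 hb
    obtain ⟨Q, h1, h2, h3, h4, h5⟩ := ih (P ++ [a, s]) (by simp) (by
        rw [List.nodup_append]
        refine ⟨hnd, by simp [has.ne], ?_⟩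
        intro x hx y hy hxy
        subst hxy
        simp only [List.mem_cons, List.not_mem_nil, or_false] at hy
        rcases hy with rfl | rfl
        · exact haP hx
        · exact hsP hx) (by
        rw [List.isChain_append]
        refine ⟨hch, by simpa using has, ?_⟩
        intro x hx y hy
        simp only [List.head?_cons, Option.mem_def, Option.some.injEq] at hy
        subst hy
        exact (hadj a (by simp) x (hl x hx)).symm) (by
        intro b hb
        simp at hb
        subst hb; exact hsX) (by
        intro b hb hbP
        simp only [List.mem_append, List.mem_cons, List.not_mem_nil, or_false] at hbP
        rcases hbP with h | h | h
        · exact hd b (by simp [hb]) h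
        · exact hAs b hb h
        · exact hAX b (by simp [hb]) (h ▸ hsX)) (List.nodup_cons.1 hAnd).2
        (fun b hb => hadj b (by simp [hb])) (by simp; omega)
    refine ⟨[a, s] ++ Q, ?_, ?_, ?_, ?_, ?_⟩
    · simpa [List.append_assoc] using h1
    · simpa [List.append_assoc] using h2
    · simp [h3]; omega
    · simpa [List.append_assoc] using h4
    · intro q hq
      simp only [List.cons_append, List.nil_append, List.mem_cons] at hq
      rcases hq with rfl | rfl | hq
      · simp
      · right; exact hsX
      · rcases h5 q hq with h | h
        · left; simp [h]
        · right; exact h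

/-- General wheel construction. -/
lemma wheel_pre {V : Type*} [DecidableEq V] {G : SimpleGraph V} {k : ℕ} (hk : 2 ≤ k) (c : V)
    (X : Finset V) (P As : List V) (hP : P ≠ []) (hAs : As ≠ []) (hPnd : P.Nodup)
    (hPch : P.IsChain G.Adj) (hh : ∀ a ∈ P.head?, a ∈ X) (hl : ∀ a ∈ P.getLast?, a ∈ X)
    (hd : ∀ a ∈ As, a ∉ P) (hAnd : As.Nodup) (hadj : ∀ a ∈ As, ∀ x ∈ X, G.Adj a x)
    (hcP : ∀ a ∈ P, G.Adj c a) (hcA : ∀ a ∈ As, G.Adj c a) (hcX : ∀ a ∈ X, G.Adj c a)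
    (hlen : P.length + 2 * As.length = 2 * k + 1) (hX : 2 * k + 1 ≤ X.card) :
    ContainsCopy (wheelGraph (2 * k + 1)) G := by
  obtain ⟨a, As, rfl⟩ := List.exists_cons_of_ne_nil hAs
  simp only [List.length_cons] at hlen
  have hAX : ∀ b ∈ a :: As, b ∉ X := fun b hb hbX => G.loopless.irrefl _ (hadj b hb b hbX)
  obtain ⟨Q, h1, h2, h3, h4, h5⟩ := zigzag (G := G) X As P hP hPnd hPch hl
    (fun b hb => hd b (by simp [hb])) (List.nodup_cons.1 hAnd).2
    (fun b hb => hadj b (by simp [hb])) (by omega)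
  have ha : a ∉ P ++ Q := by
    intro h
    rcases List.mem_append.1 h with h | h
    · exact hd a (by simp) h
    · rcases h5 a h with h | h
      · exact (List.nodup_cons.1 hAnd).1 h
      · exact hAX a (by simp) h
  refine copy_of_list hk c (P ++ Q ++ [a]) ?_ ?_ ?_ ?_ ?_
  · simp; omega
  · rw [List.nodup_append]
    refine ⟨h1, by simp, ?_⟩
    intro x hx y hy hxy
    simp only [List.mem_cons, List.not_mem_nil, or_false] at hy
    subst hy; subst hxy; exact ha hx
  · rw [List.isChain_append]
    refine ⟨h2, by simp, ?_⟩
    intro x hx y hy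
    simp only [List.head?_cons, Option.mem_def, Option.some.injEq] at hy
    subst hy
    exact (hadj a (by simp) x (h4 x hx)).symm
  · intro x hx y hy
    simp at hx
    subst hx
    obtain ⟨p, P, rfl⟩ := List.exists_cons_of_ne_nil hP
    simp at hy
    subst hy
    exact hadj a (by simp) p (hh p (by simp))
  · intro x hx
    simp only [List.mem_append, List.mem_cons, List.not_mem_nil, or_false] at hx
    rcases hx with (h | h) | rfl
    · exact hcP x h
    · rcases h5 x h with h | h
      · exact hcA x (by simp [h])
      · exact hcX x h
    · exact hcA x (by simp)

/-- A large complete bipartite graph in a neighbourhood gives a wheel. -/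
lemma wheel_of_bip {V : Type*} [DecidableEq V] {G : SimpleGraph V} {k : ℕ} (hk : 2 ≤ k) (c : V)
    (A X : Finset V) (hA : k ≤ A.card) (hX : 2 * k + 1 ≤ X.card)
    (hadj : ∀ a ∈ A, ∀ x ∈ X, G.Adj a x) (hcA : ∀ a ∈ A, G.Adj c a)
    (hcX : ∀ a ∈ X, G.Adj c a) : ContainsCopy (wheelGraph (2 * k + 1)) G := by
  obtain ⟨A', hA', hcard⟩ := Finset.exists_subset_card_eq hA
  obtain ⟨x, hx⟩ : X.Nonempty := Finset.card_pos.1 (by omega)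
  refine wheel_pre hk c X [x] A'.toList (by simp) ?_ (by simp) (by simp) (by simpa using hx)
    (by simpa using hx) ?_ (Finset.nodup_toList _) ?_ ?_ ?_ hcX ?_ hX
  · intro h
    have := congrArg List.length h
    simp at this
    rw [this] at hcard; simp at hcard; omega
  · intro a ha hax
    simp only [List.mem_cons, List.not_mem_nil, or_false] at hax
    subst hax
    exact G.loopless.irrefl _ (hadj a (hA' (Finset.mem_toList.1 ha)) a hx)
  · intro a ha; exact hadj a (hA' (Finset.mem_toList.1 ha))
  · simpa using hcX x hx
  · intro a ha; exact hcA a (hA' (Finset.mem_toList.1 ha))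
  · simp [hcard]; omega


open Classical in
lemma degIn_eq {n : ℕ} (G : SimpleGraph (Fin n)) (A : Finset (Fin n)) (v : Fin n) :
    degIn G A v = (A.filter fun u => G.Adj v u).card := by
  unfold degIn
  congr

open Classical in
lemma cyc_count {V : Type*} {k : ℕ} (hk : 2 ≤ k) (L : Finset V) (f : ZMod (2 * k) → V)
    [NeZero (2 * k)]
    (hL : (Finset.univ.filter fun i => f i ∈ L).card ≤ k - 1)
    (hR : (Finset.univ.filter fun i => f i ∉ L ∧ f (i + 1) ∉ L).card ≤ 1) : False := by
  have h1 : (Finset.univ.filter fun i => f i ∈ L).card +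
      (Finset.univ.filter fun i => f i ∉ L).card = 2 * k := by
    rw [Finset.card_filter_add_card_filter_not, Finset.card_univ, ZMod.card]
  have h2 : (Finset.univ.filter fun i => f i ∉ L ∧ f (i + 1) ∈ L).card ≤
      (Finset.univ.filter fun i => f i ∈ L).card := by
    apply Finset.card_le_card_of_injOn (fun i => i + 1)
    · intro i hi
      simp only [Finset.coe_filter, Finset.mem_univ, true_and, Set.mem_ofPred_eq] at hi ⊢
      exact hi.2
    · intro i _ j _ hij
      exact add_right_cancel hij
  have h3 : (Finset.univ.filter fun i => f i ∉ L).card ≤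
      (Finset.univ.filter fun i => f i ∉ L ∧ f (i + 1) ∈ L).card +
      (Finset.univ.filter fun i => f i ∉ L ∧ f (i + 1) ∉ L).card := by
    rw [← Finset.card_union_of_disjoint]
    · apply Finset.card_le_card
      intro i hi
      simp only [Finset.mem_union, Finset.mem_filter, Finset.mem_univ, true_and] at hi ⊢
      tauto
    · rw [Finset.disjoint_left]
      intro i hi
      simp only [Finset.mem_filter, Finset.mem_univ, true_and] at hi ⊢
      tauto
  omega

lemma path_of_cyc {V : Type*} {G : SimpleGraph V} {k : ℕ} (hk : 2 ≤ k) (f : ZMod (2 * k) → V)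
    (hf : Function.Injective f) (hadj : ∀ i, G.Adj (f i) (f (i + 1))) (i0 : ZMod (2 * k)) :
    ∃ l : List V, l.length = 2 * k - 1 ∧ l.Nodup ∧ l.IsChain G.Adj ∧
      ∀ x ∈ l, ∃ i, i ≠ i0 ∧ x = f i := by
  have : NeZero (2 * k) := ⟨by omega⟩
  have hcast : ∀ i j : ℕ, i < 2 * k → j < 2 * k → ((i : ℕ) : ZMod (2 * k)) = j → i = j := by
    intro i j hi hj h
    have := congrArg ZMod.val h
    rwa [ZMod.val_natCast_of_lt hi, ZMod.val_natCast_of_lt hj] at this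
  refine ⟨(List.range (2 * k - 1)).map (fun j => f (i0 + 1 + (j : ℕ))), by simp, ?_, ?_, ?_⟩
  · apply List.Nodup.map_on _ List.nodup_range
    intro x hx y hy hxy
    rw [List.mem_range] at hx hy
    exact hcast x y (by omega) (by omega) (add_left_cancel (hf hxy))
  · rw [List.isChain_map, List.isChain_range]
    intro m hm
    have := hadj (i0 + 1 + (m : ℕ))
    convert this using 2
    push_cast
    ring
  · intro x hx
    simp only [List.mem_map, List.mem_range] at hx
    obtain ⟨j, hj, rfl⟩ := hx
    refine ⟨_, ?_, rfl⟩
    intro h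
    have h2 : ((1 + j : ℕ) : ZMod (2 * k)) = ((0 : ℕ) : ZMod (2 * k)) := by
      push_cast
      have : i0 + (1 + (j : ZMod (2 * k))) = i0 + 0 := by rw [← add_assoc, h, add_zero]
      exact add_left_cancel this
    have := hcast _ _ (by omega) (by omega) h2
    omega

open Classical in
lemma no_center_L {n k : ℕ} (hk : 2 ≤ k) (G : SimpleGraph (Fin n)) (L : Finset (Fin n))
    (a b : Fin n)
    (hdeg : ∀ u ∈ L, degIn G L u ≤ k - 1)
    (hR : ∀ x y, x ∉ L → y ∉ L → G.Adj x y → (x = a ∧ y = b) ∨ (x = b ∧ y = a))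
    (c : Fin n) (f : ZMod (2 * k) → Fin n) (hf : Function.Injective f)
    (hadj : ∀ i, G.Adj (f i) (f (i + 1))) (hc : ∀ i, G.Adj c (f i)) (hcL : c ∈ L) : False := by
  have : NeZero (2 * k) := ⟨by omega⟩
  apply cyc_count hk L f
  · refine le_trans ?_ (hdeg c hcL)
    rw [degIn_eq]
    apply Finset.card_le_card_of_injOn f
    · intro i hi
      simp only [Finset.coe_filter, Finset.mem_univ, true_and, Set.mem_ofPred_eq] at hi ⊢
      exact ⟨hi, hc i⟩
    · intro i _ j _ hij
      exact hf hij
  · rw [Finset.card_le_one]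
    intro i hi j hj
    simp only [Finset.mem_filter, Finset.mem_univ, true_and] at hi hj
    have key : ∀ i j : ZMod (2 * k), f i = a → f (i + 1) = b → f j = b → f (j + 1) = a →
        False := by
      intro i j h1 h2 h3 h4
      have e1 : i + 1 = j := hf (h2.trans h3.symm)
      have e2 : j + 1 = i := hf (h4.trans h1.symm)
      rw [← e1] at e2
      have e3 : ((2 : ℕ) : ZMod (2 * k)) = ((0 : ℕ) : ZMod (2 * k)) := by
        have : i + (1 + 1) = i + 0 := by rw [← add_assoc, e2, add_zero]
        have := add_left_cancel this
        push_cast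
        rw [← this]; norm_num
      have := congrArg ZMod.val e3
      rw [ZMod.val_natCast_of_lt (by omega), ZMod.val_natCast_of_lt (by omega)] at this
      omega
    rcases hR _ _ hi.1 hi.2 (hadj i) with h | h <;> rcases hR _ _ hj.1 hj.2 (hadj j) with h' | h'
    · exact hf (h.1.trans h'.1.symm)
    · exact (key i j h.1 h.2 h'.1 h'.2).elim
    · exact (key j i h'.1 h'.2 h.1 h.2).elim
    · exact hf (h.1.trans h'.1.symm)

lemma wheelfree_one {n k : ℕ} (hk : 2 ≤ k) (G : SimpleGraph (Fin n)) (L : Finset (Fin n))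
    (a b : Fin n)
    (hdeg : ∀ u ∈ L, degIn G L u ≤ k - 1)
    (hR : ∀ x y, x ∉ L → y ∉ L → G.Adj x y → (x = a ∧ y = b) ∨ (x = b ∧ y = a))
    (hpath : ∀ l : List (Fin n), l.length = 2 * k - 1 → l.Nodup → l.IsChain G.Adj →
      (∀ x ∈ l, x ∈ L) → False) : WheelFree (2 * k + 1) G := by
  intro hcopy
  obtain ⟨c, f, hf, hadj, hc⟩ := cyc_of_copy hk hcopy
  by_cases hcL : c ∈ L
  · exact no_center_L hk G L a b hdeg hR c f hf hadj hc hcL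
  · by_cases hall : ∀ i, f i ∈ L
    · obtain ⟨l, h1, h2, h3, h4⟩ := path_of_cyc hk f hf hadj 0
      refine hpath l h1 h2 h3 ?_
      intro x hx
      obtain ⟨i, _, rfl⟩ := h4 x hx
      exact hall i
    · push Not at hall
      obtain ⟨i0, hi0⟩ := hall
      obtain ⟨l, h1, h2, h3, h4⟩ := path_of_cyc hk f hf hadj i0
      refine hpath l h1 h2 h3 ?_
      intro x hx
      obtain ⟨i, hi, rfl⟩ := h4 x hx
      by_contra hiL
      have e1 := hR _ _ hcL hi0 (hc i0)
      have e2 := hR _ _ hcL hiL (hc i)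
      apply hi
      apply hf
      have := (hc i0).ne
      have := (hc i).ne
      grind

lemma wheelfree_zero {n k : ℕ} (hk : 2 ≤ k) (G : SimpleGraph (Fin n)) (L : Finset (Fin n))
    (hdeg : ∀ u ∈ L, degIn G L u ≤ k - 1)
    (hR : ∀ x y, x ∉ L → y ∉ L → ¬ G.Adj x y)
    (hcyc : ∀ f : ZMod (2 * k) → Fin n, Function.Injective f →
      (∀ i, G.Adj (f i) (f (i + 1))) → (∀ i, f i ∈ L) → False) : WheelFree (2 * k + 1) G := by
  intro hcopy
  obtain ⟨c, f, hf, hadj, hc⟩ := cyc_of_copy hk hcopy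
  by_cases hcL : c ∈ L
  · exact no_center_L hk G L c c hdeg (fun x y hx hy h => (hR x y hx hy h).elim) c f hf hadj hc hcL
  · refine hcyc f hf hadj ?_
    intro i
    by_contra h
    exact hR _ _ hcL h (hc i)

/-- Rewiring a vertex `w` to `T` keeps the graph wheel-free, if common neighbours abound. -/
lemma rewire_free {n t : ℕ} (G G' : SimpleGraph (Fin n)) (w : Fin n) (T : Finset (Fin n))
    (hG : WheelFree t G)
    (h1 : ∀ x y, x ≠ w → y ≠ w → G'.Adj x y → G.Adj x y)
    (h2 : ∀ y, G'.Adj w y → y ∈ T)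
    (h3 : ∀ U : Finset (Fin n), U.card ≤ t → ∃ w', w' ∉ U ∧ ∀ y ∈ U, y ∈ T → G.Adj w' y) :
    WheelFree t G' := by
  classical
  rintro ⟨φ, hφ⟩
  obtain ⟨w', hw', hadj⟩ := h3 (Finset.univ.image φ) (by
    refine le_trans Finset.card_image_le ?_
    simp)
  have hw'' : ∀ a, φ a ≠ w' := by
    intro a h
    exact hw' (by rw [← h]; simp)
  apply hG
  refine ⟨⟨fun a => if φ a = w then w' else φ a, ?_⟩, ?_⟩
  · intro a b hab
    apply φ.injective
    simp only at hab
    split_ifs at hab with ha hb hb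
    · rw [ha, hb]
    · exact (hw'' b hab.symm).elim
    · exact (hw'' a hab).elim
    · exact hab
  · intro a b hab
    have h := hφ a b hab
    change G.Adj (if φ a = w then w' else φ a) (if φ b = w then w' else φ b)
    split_ifs with ha hb hb
    · rw [ha, hb] at h; exact (G'.loopless.irrefl _ h).elim
    · rw [ha] at h
      exact hadj _ (by simp) (h2 _ h)
    · rw [hb] at h
      exact (hadj _ (by simp) (h2 _ h.symm)).symm
    · exact h1 _ _ ha hb h


open Matrix in
lemma quad_expand {n : ℕ} (A : Matrix (Fin n) (Fin n) ℝ) (hA : A.IsSymm) (v y : Fin n → ℝ) (t : ℝ) :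
    (v + t • y) ⬝ᵥ A *ᵥ (v + t • y) = v ⬝ᵥ A *ᵥ v + 2 * t * (y ⬝ᵥ A *ᵥ v) + t ^ 2 * (y ⬝ᵥ A *ᵥ y) := by
  have h : v ⬝ᵥ A *ᵥ y = y ⬝ᵥ A *ᵥ v := by
    rw [Matrix.dotProduct_mulVec, ← Matrix.mulVec_transpose, hA.eq, dotProduct_comm]
  simp only [Matrix.mulVec_add, Matrix.mulVec_smul, add_dotProduct, dotProduct_add, smul_dotProduct,
    dotProduct_smul, smul_eq_mul, h]
  ring

open Matrix in
/-- Existence of a maximizer of the Rayleigh quotient, nonnegative for nonnegative matrices. -/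
lemma exists_max {n : ℕ} (hn : 0 < n) (A : Matrix (Fin n) (Fin n) ℝ) (hA : A.IsSymm)
    (hpos : ∀ i j, 0 ≤ A i j) : ∃ (μ : ℝ) (v : Fin n → ℝ), (∀ i, 0 ≤ v i) ∧ v ≠ 0 ∧ A *ᵥ v = μ • v ∧
      ∀ y, y ⬝ᵥ A *ᵥ y ≤ μ * (y ⬝ᵥ y) := by
  set S : Set (Fin n → ℝ) := {x | x ⬝ᵥ x = 1} with hS
  have hcont : Continuous fun x : Fin n → ℝ => x ⬝ᵥ x := by
    unfold dotProduct; fun_prop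
  have hcompact : IsCompact S := by
    apply Metric.isCompact_of_isClosed_isBounded
    · exact isClosed_eq hcont continuous_const
    · apply (Metric.isBounded_closedBall (x := (0 : Fin n → ℝ)) (r := 1)).subset
      intro x hx
      rw [mem_closedBall_zero_iff, pi_norm_le_iff_of_nonneg zero_le_one]
      intro i
      have h1 : x ⬝ᵥ x = 1 := hx
      have h2 : x i * x i ≤ x ⬝ᵥ x :=
        Finset.single_le_sum (f := fun i => x i * x i) (fun j _ => mul_self_nonneg _) (Finset.mem_univ i)
      rw [Real.norm_eq_abs]
      refine abs_le_of_sq_le_sq ?_ zero_le_one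
      nlinarith
  have hne : S.Nonempty := by
    refine ⟨Pi.single ⟨0, hn⟩ 1, ?_⟩
    simp [hS]
  have hcont2 : Continuous fun x : Fin n → ℝ => x ⬝ᵥ A *ᵥ x := by
    unfold dotProduct Matrix.mulVec dotProduct; fun_prop
  obtain ⟨w, hw, hmax⟩ := hcompact.exists_isMaxOn hne hcont2.continuousOn
  set v : Fin n → ℝ := fun i => |w i| with hv
  have hw1 : w ⬝ᵥ w = 1 := hw
  have hv1 : v ⬝ᵥ v = 1 := by
    rw [← hw1]; simp [hv, dotProduct, abs_mul_abs_self]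
  set μ := v ⬝ᵥ A *ᵥ v with hμ
  have hle : ∀ x ∈ S, x ⬝ᵥ A *ᵥ x ≤ μ := by
    intro x hx
    refine le_trans (hmax hx) ?_
    rw [hμ]
    simp only [dotProduct, Matrix.mulVec, Finset.mul_sum]
    apply Finset.sum_le_sum; intro i _
    apply Finset.sum_le_sum; intro j _
    calc w i * (A i j * w j) ≤ |w i * (A i j * w j)| := le_abs_self _
      _ = v i * (A i j * v j) := by rw [abs_mul, abs_mul, abs_of_nonneg (hpos i j)]
  have hray : ∀ y, y ⬝ᵥ A *ᵥ y ≤ μ * (y ⬝ᵥ y) := by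
    intro y
    by_cases hy : y = 0
    · subst hy; simp
    · have hpos : 0 < y ⬝ᵥ y := by
        have h0 : 0 ≤ y ⬝ᵥ y := Finset.sum_nonneg fun i _ => mul_self_nonneg _
        rcases h0.lt_or_eq with h | h
        · exact h
        · exact (hy (dotProduct_self_eq_zero.1 h.symm)).elim
      set s := Real.sqrt (y ⬝ᵥ y)
      have hs : s * s = y ⬝ᵥ y := Real.mul_self_sqrt hpos.le
      have hs0 : 0 < s := Real.sqrt_pos.2 hpos
      have := hle (s⁻¹ • y) (by
        change (s⁻¹ • y) ⬝ᵥ (s⁻¹ • y) = 1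
        rw [smul_dotProduct, dotProduct_smul, ← hs]
        simp only [smul_eq_mul]
        field_simp)
      rw [Matrix.mulVec_smul, smul_dotProduct, dotProduct_smul] at this
      simp only [smul_eq_mul] at this
      rw [← hs]
      have h2 : s * s * (s⁻¹ * (s⁻¹ * (y ⬝ᵥ A *ᵥ y))) ≤ s * s * μ :=
        mul_le_mul_of_nonneg_left this (by positivity)
      have h3 : s * s * (s⁻¹ * (s⁻¹ * (y ⬝ᵥ A *ᵥ y))) = y ⬝ᵥ A *ᵥ y := by field_simp
      linarith
  refine ⟨μ, v, fun i => abs_nonneg _, ?_, ?_, hray⟩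
  · intro h; rw [h] at hv1; simp at hv1
  · set y := A *ᵥ v - μ • v with hy
    set C := μ * (y ⬝ᵥ y) - y ⬝ᵥ A *ᵥ y with hC
    have hC0 : 0 ≤ C := by have := hray y; linarith
    have hyy : y ⬝ᵥ A *ᵥ v - μ * (y ⬝ᵥ v) = y ⬝ᵥ y := by
      conv_rhs => rw [hy, dotProduct_sub, dotProduct_smul]
      simp [hy]
    have hq : ∀ t : ℝ, 0 ≤ -2 * t * (y ⬝ᵥ y) + t ^ 2 * C := by
      intro t
      have h1 := hray (v + t • y)
      rw [quad_expand A hA] at h1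
      have h2 : (v + t • y) ⬝ᵥ (v + t • y) = v ⬝ᵥ v + 2 * t * (y ⬝ᵥ v) + t ^ 2 * (y ⬝ᵥ y) := by
        have := quad_expand 1 (Matrix.isSymm_one) v y t
        simpa using this
      rw [h2, hv1] at h1
      rw [← hyy]
      nlinarith
    have hy0 : y ⬝ᵥ y = 0 := by
      set s := y ⬝ᵥ y with hs
      have h0 : 0 ≤ s := Finset.sum_nonneg fun i _ => mul_self_nonneg _
      by_contra hne
      have hsp : 0 < s := lt_of_le_of_ne h0 (Ne.symm hne)
      have := hq (s / (C + 1))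
      have e : -2 * (s / (C + 1)) * s + (s / (C + 1)) ^ 2 * C = - (s ^ 2 * (C + 2)) / (C + 1) ^ 2 := by
        field_simp; ring
      rw [e] at this
      have : 0 < (s ^ 2 * (C + 2)) / (C + 1) ^ 2 := by positivity
      rw [neg_div] at *
      linarith
    have := dotProduct_self_eq_zero.1 hy0
    exact sub_eq_zero.1 this

open Classical in
/-- The quadratic form of the adjacency matrix. -/
noncomputable def qf {n : ℕ} (G : SimpleGraph (Fin n)) (x : Fin n → ℝ) : ℝ :=
  ∑ u, ∑ v, if G.Adj u v then x u * x v else 0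

open Classical Matrix in
lemma perron_aux {n : ℕ} (hn : 0 < n) (G : SimpleGraph (Fin n)) :
    ∃ v : Fin n → ℝ, (∀ i, 0 ≤ v i) ∧ v ≠ 0 ∧
      (∀ u, ∑ w, (if G.Adj u w then v w else 0) = lam1 G * v u) ∧
      ∀ y : Fin n → ℝ, qf G y ≤ lam1 G * ∑ i, y i ^ 2 := by
  obtain ⟨μ, v, h0, hne, heig, hray⟩ := exists_max hn (G.adjMatrix ℝ) (by
      exact SimpleGraph.isSymm_adjMatrix G) (by
      intro i j; rw [SimpleGraph.adjMatrix_apply]; split_ifs <;> norm_num)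
  have hlam : lam1 G = μ := by
    unfold lam1
    apply IsGreatest.csSup_eq
    constructor
    · have : Module.End.HasEigenvector (Matrix.toLin' (G.adjMatrix ℝ)) μ v := by
        rw [Module.End.hasEigenvector_iff]
        refine ⟨?_, hne⟩
        rw [Module.End.mem_eigenspace_iff, Matrix.toLin'_apply]
        exact heig
      have h2 := Module.End.hasEigenvalue_of_hasEigenvector this
      convert h2
    · intro ν hν
      have hν' : Module.End.HasEigenvalue (Matrix.toLin' (G.adjMatrix ℝ)) ν := by
        convert hν
      obtain ⟨w, hw⟩ := hν'.exists_hasEigenvector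
      rw [Module.End.hasEigenvector_iff, Module.End.mem_eigenspace_iff, Matrix.toLin'_apply] at hw
      have h1 := hray w
      rw [hw.1, dotProduct_smul, smul_eq_mul] at h1
      have hpos : 0 < w ⬝ᵥ w := by
        have h0 : 0 ≤ w ⬝ᵥ w := Finset.sum_nonneg fun i _ => mul_self_nonneg _
        rcases h0.lt_or_eq with h | h
        · exact h
        · exact (hw.2 (dotProduct_self_eq_zero.1 h.symm)).elim
      exact le_of_mul_le_mul_right h1 hpos
  rw [hlam]
  refine ⟨v, h0, hne, ?_, ?_⟩
  · intro u
    have := congrFun heig u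
    simp only [Matrix.mulVec, dotProduct, SimpleGraph.adjMatrix_apply, ite_mul, one_mul, zero_mul,
      Pi.smul_apply, smul_eq_mul] at this
    exact this
  · intro y
    have := hray y
    simp only [Matrix.mulVec, dotProduct, SimpleGraph.adjMatrix_apply, ite_mul, one_mul, zero_mul,
      Finset.mul_sum, mul_ite, mul_zero] at this
    unfold qf
    rw [Finset.mul_sum]
    simpa only [pow_two] using this

open Classical in
lemma perron {n : ℕ} (hn : 0 < n) (G : SimpleGraph (Fin n)) :
    ∃ x : Fin n → ℝ, (∀ i, 0 ≤ x i) ∧ (∀ i, x i ≤ 1) ∧ (∃ z, x z = 1) ∧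
      (∀ u, ∑ w, (if G.Adj u w then x w else 0) = lam1 G * x u) := by
  obtain ⟨v, h0, hne, heig, _⟩ := perron_aux hn G
  have : Nonempty (Fin n) := ⟨⟨0, hn⟩⟩
  obtain ⟨z, hz⟩ := Finite.exists_max v
  have hzp : 0 < v z := by
    rcases (h0 z).lt_or_eq with h | h
    · exact h
    · exfalso; apply hne; funext i
      have h1 := hz i
      have h2 := h0 i
      simp only [Pi.zero_apply]; linarith
  refine ⟨fun i => v i / v z, fun i => div_nonneg (h0 i) hzp.le, fun i => (div_le_one hzp).2 (hz i),
    ⟨z, div_self hzp.ne'⟩, ?_⟩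
  intro u
  rw [mul_div_assoc', ← heig u, Finset.sum_div]
  apply Finset.sum_congr rfl
  intro w _
  split_ifs <;> simp

lemma rayleigh {n : ℕ} (hn : 0 < n) (G : SimpleGraph (Fin n)) (y : Fin n → ℝ) :
    qf G y ≤ lam1 G * ∑ i, y i ^ 2 := by
  obtain ⟨v, _, _, _, h⟩ := perron_aux hn G
  exact h y

open Classical in
lemma qf_eigen {n : ℕ} (G : SimpleGraph (Fin n)) (x : Fin n → ℝ) (μ : ℝ)
    (hx : ∀ u, ∑ w, (if G.Adj u w then x w else 0) = μ * x u) :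
    qf G x = μ * ∑ i, x i ^ 2 := by
  unfold qf
  rw [Finset.mul_sum]
  apply Finset.sum_congr rfl
  intro u _
  have : ∑ v, (if G.Adj u v then x u * x v else 0) = x u * ∑ v, (if G.Adj u v then x v else 0) := by
    rw [Finset.mul_sum]; apply Finset.sum_congr rfl; intro v _; split_ifs <;> simp
  rw [this, hx]; ring


open Classical in
/-- A weak form of the Kővári–Sós–Turán theorem. -/
lemma kst (K : ℕ) (hK : 1 ≤ K) (δ : ℝ) (hδ : 0 < δ) : ∃ N : ℕ, ∀ n : ℕ, N ≤ n →
    ∀ (G : SimpleGraph (Fin n)) (A B : Finset (Fin n)),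
      δ * (n : ℝ) ^ 2 ≤ ∑ b ∈ B, ((A.filter fun a => G.Adj b a).card : ℝ) →
      ∃ S ⊆ A, ∃ T ⊆ B, K ≤ S.card ∧ K ≤ T.card ∧ ∀ s ∈ S, ∀ t ∈ T, G.Adj s t := by
  obtain ⟨m, hm⟩ := exists_nat_gt (4 * K / δ)
  obtain ⟨N1, hN1⟩ := exists_nat_gt (2 * m / δ)
  have hmδ : 4 * (K : ℝ) < m * δ := by rwa [div_lt_iff₀ hδ] at hm
  refine ⟨max (max N1 (m * 2 ^ m)) 1, ?_⟩
  intro n hn G A B hsum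
  have hn1 : N1 ≤ n := le_trans (le_trans (le_max_left _ _) (le_max_left _ _)) hn
  have hn2 : m * 2 ^ m ≤ n := le_trans (le_trans (le_max_right _ _) (le_max_left _ _)) hn
  have hn3 : 1 ≤ n := le_trans (le_max_right _ _) hn
  have hnpos : (0 : ℝ) < n := by exact_mod_cast hn3
  have hnδ : 2 * (m : ℝ) < n * δ := by
    have : (N1 : ℝ) ≤ n := by exact_mod_cast hn1
    rw [div_lt_iff₀ hδ] at hN1
    nlinarith
  have hcardn : ∀ S : Finset (Fin n), (S.card : ℝ) ≤ n := by
    intro S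
    have := Finset.card_le_univ S
    rw [Fintype.card_fin] at this
    exact_mod_cast this
  set B' := B.filter fun b => δ * n / 2 ≤ ((A.filter fun a => G.Adj b a).card : ℝ) with hB'
  have hB'card : m ≤ B'.card := by
    have h1 : ∑ b ∈ B, ((A.filter fun a => G.Adj b a).card : ℝ) ≤
        ∑ b ∈ B, ((if b ∈ B' then (n : ℝ) else 0) + δ * n / 2) := by
      apply Finset.sum_le_sum
      intro b hb
      by_cases h : b ∈ B'
      · rw [if_pos h]
        have := hcardn (A.filter fun a => G.Adj b a)
        have : 0 ≤ δ * n / 2 := by positivity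
        linarith
      · rw [if_neg h]
        simp only [hB', Finset.mem_filter, not_and, not_le] at h
        have := h hb
        linarith
    rw [Finset.sum_add_distrib, Finset.sum_const, ← Finset.sum_filter, Finset.sum_const] at h1
    have h2 : (B.filter fun b => b ∈ B') = B' := by
      ext b; simp [hB']
    rw [h2] at h1
    simp only [nsmul_eq_mul] at h1
    have h3 : (B.card : ℝ) * (δ * n / 2) ≤ n * (δ * n / 2) :=
      mul_le_mul_of_nonneg_right (hcardn B) (by positivity)
    have h4 : (m : ℝ) * n ≤ B'.card * n := by nlinarith
    have := le_of_mul_le_mul_right h4 hnpos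
    exact_mod_cast this
  obtain ⟨B0, hB0, hB0c⟩ := Finset.exists_subset_card_eq hB'card
  have hdc : ∑ b ∈ B0, ((A.filter fun a => G.Adj b a).card : ℝ) =
      ∑ a ∈ A, ((B0.filter fun b => G.Adj a b).card : ℝ) := by
    simp only [Finset.card_filter, Nat.cast_sum, Nat.cast_ite, Nat.cast_one, Nat.cast_zero]
    rw [Finset.sum_comm]
    simp only [G.adj_comm]
  have hlow : (m : ℝ) * (δ * n / 2) ≤ ∑ b ∈ B0, ((A.filter fun a => G.Adj b a).card : ℝ) := by
    have : ∑ b ∈ B0, (δ * n / 2) ≤ ∑ b ∈ B0, ((A.filter fun a => G.Adj b a).card : ℝ) := by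
      apply Finset.sum_le_sum
      intro b hb
      have := hB0 hb
      simp only [hB', Finset.mem_filter] at this
      exact this.2
    rwa [Finset.sum_const, hB0c, nsmul_eq_mul] at this
  set A' := A.filter fun a => K ≤ (B0.filter fun b => G.Adj a b).card with hA'
  have hA'card : (K : ℝ) * n ≤ A'.card * m := by
    have h1 : ∑ a ∈ A, ((B0.filter fun b => G.Adj a b).card : ℝ) ≤
        ∑ a ∈ A, ((if a ∈ A' then (m : ℝ) else 0) + K) := by
      apply Finset.sum_le_sum
      intro a ha
      by_cases h : a ∈ A'
      · rw [if_pos h]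
        have : (B0.filter fun b => G.Adj a b).card ≤ m := by
          rw [← hB0c]; exact Finset.card_filter_le _ _
        have : ((B0.filter fun b => G.Adj a b).card : ℝ) ≤ m := by exact_mod_cast this
        have : (0 : ℝ) ≤ K := by positivity
        linarith
      · rw [if_neg h]
        simp only [hA', Finset.mem_filter, not_and, not_le] at h
        have : ((B0.filter fun b => G.Adj a b).card : ℝ) ≤ K := by exact_mod_cast (h ha).le
        linarith
    rw [Finset.sum_add_distrib, Finset.sum_const, ← Finset.sum_filter, Finset.sum_const] at h1
    have h2 : (A.filter fun b => b ∈ A') = A' := by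
      ext b; simp [hA']
    rw [h2] at h1
    simp only [nsmul_eq_mul] at h1
    have h3 : (A.card : ℝ) * K ≤ n * K := mul_le_mul_of_nonneg_right (hcardn A) (by positivity)
    nlinarith
  have hA'2 : 2 ^ m * K ≤ A'.card := by
    have h1 : K * n ≤ A'.card * m := by exact_mod_cast hA'card
    have h2 : K * (m * 2 ^ m) ≤ A'.card * m := le_trans (Nat.mul_le_mul_left _ hn2) h1
    have hm0 : 0 < m := by
      rcases Nat.eq_zero_or_pos m with h | h
      · subst h
        have : (1 : ℝ) ≤ K := by exact_mod_cast hK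
        simp at hmδ; linarith
      · exact h
    have h3 : (2 ^ m * K) * m ≤ A'.card * m := by
      calc (2 ^ m * K) * m = K * (m * 2 ^ m) := by ring
        _ ≤ _ := h2
    exact Nat.le_of_mul_le_mul_right h3 hm0
  obtain ⟨T, hT, hcard⟩ := Finset.exists_le_card_fiber_of_mul_le_card_of_maps_to
    (s := A') (t := B0.powerset) (f := fun a => B0.filter fun b => G.Adj a b) (n := K)
    (fun a _ => Finset.mem_powerset.2 (Finset.filter_subset _ _)) ⟨∅, by simp⟩
    (by rw [Finset.card_powerset, hB0c]; exact hA'2)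
  refine ⟨A'.filter fun a => (B0.filter fun b => G.Adj a b) = T, ?_, T, ?_, hcard, ?_, ?_⟩
  · exact (Finset.filter_subset _ _).trans (Finset.filter_subset _ _)
  · exact (Finset.mem_powerset.1 hT).trans (hB0.trans (Finset.filter_subset _ _))
  · obtain ⟨a, ha⟩ := Finset.card_pos.1 (lt_of_lt_of_le hK hcard)
    simp only [Finset.mem_filter] at ha
    rw [← ha.2]
    have := ha.1
    simp only [hA', Finset.mem_filter] at this
    exact this.2
  · intro s hs t ht
    simp only [Finset.mem_filter] at hs
    rw [← hs.2] at ht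
    exact (Finset.mem_filter.1 ht).2

open Classical in
lemma qf_split {n : ℕ} (H : SimpleGraph (Fin n)) (y : Fin n → ℝ) (w : Fin n) :
    qf H y = ∑ u ∈ Finset.univ.erase w, ∑ v ∈ Finset.univ.erase w,
      (if H.Adj u v then y u * y v else 0) +
      2 * (y w * ∑ v, (if H.Adj w v then y v else 0)) := by
  unfold qf
  rw [← Finset.add_sum_erase _ _ (Finset.mem_univ w)]
  have h1 : ∀ u, ∑ v, (if H.Adj u v then y u * y v else 0) =
      (if H.Adj u w then y u * y w else 0) + ∑ v ∈ Finset.univ.erase w,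
        (if H.Adj u v then y u * y v else 0) := fun u =>
    (Finset.add_sum_erase _ _ (Finset.mem_univ w)).symm
  have h2 : ∑ u ∈ Finset.univ.erase w, (if H.Adj u w then y u * y w else 0) =
      y w * ∑ v, (if H.Adj w v then y v else 0) := by
    rw [← Finset.add_sum_erase _ _ (Finset.mem_univ w), if_neg (H.loopless.irrefl w), zero_add,
      Finset.mul_sum]
    apply Finset.sum_congr rfl
    intro v _
    rw [H.adj_comm]
    split_ifs
    · ring
    · ring
  have h3 : ∑ v, (if H.Adj w v then y w * y v else 0) = y w * ∑ v, (if H.Adj w v then y v else 0) := by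
    rw [Finset.mul_sum]
    apply Finset.sum_congr rfl
    intro v _
    split_ifs <;> simp
  rw [h3, Finset.sum_congr rfl (fun u _ => h1 u), Finset.sum_add_distrib, h2]
  ring

open Classical in
lemma rewire_spec {n : ℕ} (hn : 0 < n) (G G' : SimpleGraph (Fin n)) (x : Fin n → ℝ) (w : Fin n)
    (T : Finset (Fin n)) (hw : w ∉ T)
    (heig : ∀ u, ∑ v, (if G.Adj u v then x v else 0) = lam1 G * x u)
    (h1 : ∀ u v, u ≠ w → v ≠ w → (G'.Adj u v ↔ G.Adj u v))
    (h2 : ∀ y, G'.Adj w y ↔ y ∈ T) (hlam : 0 < lam1 G) (hx0 : 0 ≤ x w)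
    (hσ : lam1 G * x w < ∑ v ∈ T, x v) : lam1 G < lam1 G' := by
  set l := lam1 G with hl
  set σ := ∑ v ∈ T, x v with hσd
  set t := σ / l with ht
  have hlt : l * t = σ := by rw [ht]; field_simp
  set x' := Function.update x w t with hx'
  have hoff : ∀ v, v ≠ w → x' v = x v := fun v hv => Function.update_of_ne hv _ _
  have hw' : x' w = t := Function.update_self _ _ _
  have hray := rayleigh hn G' x'
  have hq := qf_eigen G x l heig
  rw [qf_split G' x' w] at hray
  rw [qf_split G x w, heig w] at hq
  have e1 : ∑ u ∈ Finset.univ.erase w, ∑ v ∈ Finset.univ.erase w,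
      (if G'.Adj u v then x' u * x' v else 0) = ∑ u ∈ Finset.univ.erase w,
      ∑ v ∈ Finset.univ.erase w, (if G.Adj u v then x u * x v else 0) := by
    apply Finset.sum_congr rfl; intro u hu
    apply Finset.sum_congr rfl; intro v hv
    have hu := Finset.ne_of_mem_erase hu
    have hv := Finset.ne_of_mem_erase hv
    rw [hoff u hu, hoff v hv]
    simp only [h1 u v hu hv]
  have e2 : ∑ v, (if G'.Adj w v then x' v else 0) = σ := by
    rw [hσd, ← Finset.sum_filter]
    have : (Finset.univ.filter fun v => G'.Adj w v) = T := by ext v; simp [h2]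
    rw [this]
    apply Finset.sum_congr rfl
    intro v hv
    exact hoff v (fun h => hw (h ▸ hv))
  have e3 : ∑ i, x' i ^ 2 = t ^ 2 + ∑ i ∈ Finset.univ.erase w, x i ^ 2 := by
    rw [← Finset.add_sum_erase _ _ (Finset.mem_univ w), hw']
    congr 1
    apply Finset.sum_congr rfl
    intro v hv
    rw [hoff v (Finset.ne_of_mem_erase hv)]
  have e4 : ∑ i, x i ^ 2 = x w ^ 2 + ∑ i ∈ Finset.univ.erase w, x i ^ 2 :=
    (Finset.add_sum_erase _ _ (Finset.mem_univ w)).symm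
  rw [e1, e2, e3, hw'] at hray
  rw [e4] at hq
  set P := ∑ i ∈ Finset.univ.erase w, x i ^ 2 with hP
  have hP0 : 0 ≤ P := Finset.sum_nonneg fun i _ => sq_nonneg _
  by_contra hcon
  push Not at hcon
  have h5 : lam1 G' * (t ^ 2 + P) ≤ l * (t ^ 2 + P) :=
    mul_le_mul_of_nonneg_right hcon (by positivity)
  have hxt : x w < t := by
    rw [← hlt] at hσ
    exact lt_of_mul_lt_mul_left hσ hlam.le
  have h6 : x w ^ 2 < t ^ 2 := by nlinarith
  have h7 : l * x w ^ 2 < l * t ^ 2 := mul_lt_mul_of_pos_left h6 hlam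
  rw [← hlt] at hray
  nlinarith

open Classical in
lemma swap_spec {n : ℕ} (hn : 0 < n) (G G' : SimpleGraph (Fin n)) (x : Fin n → ℝ)
    (heig : ∀ u, ∑ v, (if G.Adj u v then x v else 0) = lam1 G * x u)
    (hx0 : ∀ i, 19 / 20 ≤ x i) (hx1 : ∀ i, x i ≤ 1)
    (p m : ℕ)
    (hp : p ≤ (Finset.univ.filter fun q : Fin n × Fin n => G'.Adj q.1 q.2 ∧ ¬ G.Adj q.1 q.2).card)
    (hm : (Finset.univ.filter fun q : Fin n × Fin n => G.Adj q.1 q.2 ∧ ¬ G'.Adj q.1 q.2).card ≤ m)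
    (hpm : 10 * m < 9 * p) : lam1 G < lam1 G' := by
  have hq := qf_eigen G x _ heig
  have hray := rayleigh hn G' x
  have key : qf G x + (9 / 10 * (p : ℝ) - m) ≤ qf G' x := by
    have h1 : (9 / 10 * (p : ℝ) - m) ≤ ∑ q : Fin n × Fin n,
        ((if G'.Adj q.1 q.2 ∧ ¬ G.Adj q.1 q.2 then (9 / 10 : ℝ) else 0) -
         (if G.Adj q.1 q.2 ∧ ¬ G'.Adj q.1 q.2 then (1 : ℝ) else 0)) := by
      rw [Finset.sum_sub_distrib, ← Finset.sum_filter, ← Finset.sum_filter, Finset.sum_const,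
        Finset.sum_const, nsmul_eq_mul, nsmul_eq_mul]
      have hp' : (p : ℝ) ≤ ((Finset.univ.filter fun q : Fin n × Fin n =>
        G'.Adj q.1 q.2 ∧ ¬ G.Adj q.1 q.2).card : ℝ) := by exact_mod_cast hp
      have hm' : ((Finset.univ.filter fun q : Fin n × Fin n =>
        G.Adj q.1 q.2 ∧ ¬ G'.Adj q.1 q.2).card : ℝ) ≤ m := by exact_mod_cast hm
      linarith
    have h2 : ∀ H : SimpleGraph (Fin n), qf H x = ∑ q : Fin n × Fin n,
        (if H.Adj q.1 q.2 then x q.1 * x q.2 else 0) := by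
      intro H
      unfold qf
      rw [Fintype.sum_prod_type]
    rw [h2 G, h2 G']
    refine le_trans (add_le_add_right h1 _) ?_
    rw [← Finset.sum_add_distrib]
    apply Finset.sum_le_sum
    intro q _
    have a1 := hx0 q.1
    have a2 := hx0 q.2
    have a3 := hx1 q.1
    have a4 := hx1 q.2
    have b1 : 9 / 10 ≤ x q.1 * x q.2 := by nlinarith
    have b2 : x q.1 * x q.2 ≤ 1 := by nlinarith
    by_cases c1 : G.Adj q.1 q.2 <;> by_cases c2 : G'.Adj q.1 q.2 <;> simp [c1, c2] <;> linarith
  have hpm' : (10 : ℝ) * m < 9 * p := by exact_mod_cast hpm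
  by_contra hcon
  push Not at hcon
  have := mul_le_mul_of_nonneg_right hcon (Finset.sum_nonneg fun i (_ : i ∈ Finset.univ) => sq_nonneg (x i))
  linarith


/-- Disjoint cliques `K_k` on the first `m` vertices, completely joined to the others. -/
def blockGraph (n k m : ℕ) : SimpleGraph (Fin n) where
  Adj i j := i ≠ j ∧ ((i.val < m ∧ j.val < m ∧ i.val / k = j.val / k) ∨ (i.val < m ∧ m ≤ j.val) ∨
    (j.val < m ∧ m ≤ i.val))
  symm := by
    constructor
    intro i j h
    refine ⟨h.1.symm, ?_⟩
    rcases h.2 with h | h | h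
    · exact Or.inl ⟨h.2.1, h.1, h.2.2.symm⟩
    · exact Or.inr (Or.inr h)
    · exact Or.inr (Or.inl h)
  loopless := by
    constructor
    intro i h
    exact h.1 rfl

lemma block_mem {k a b : ℕ} (hk : 0 < k) (h : a / k = b / k) :
    a ∈ Finset.Ico (k * (b / k)) (k * (b / k) + k) := by
  rw [Finset.mem_Ico, ← h]
  have := Nat.div_add_mod a k
  have := Nat.mod_lt a hk
  omega

open Classical in
lemma blockGraph_free {n k m : ℕ} (hk : 2 ≤ k) : WheelFree (2 * k + 1) (blockGraph n k m) := by
  apply wheelfree_zero hk _ (Finset.univ.filter fun i : Fin n => i.val < m)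
  · intro u hu
    rw [degIn_eq]
    simp only [Finset.mem_filter, Finset.mem_univ, true_and] at hu
    have : ((Finset.Ico (k * (u.val / k)) (k * (u.val / k) + k)).erase u.val).card = k - 1 := by
      rw [Finset.card_erase_of_mem (block_mem (by omega) rfl)]
      simp
    rw [← this]
    apply Finset.card_le_card_of_injOn Fin.val
    · intro i hi
      simp only [Finset.coe_filter, Finset.mem_filter, Finset.mem_univ, true_and,
        Set.mem_ofPred_eq] at hi
      obtain ⟨h1, h2, h3⟩ := hi
      simp only [Finset.coe_erase, Set.mem_sdiff, Finset.mem_coe, Set.mem_singleton_iff]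
      refine ⟨block_mem (by omega) ?_, fun h => h2 (Fin.ext h.symm)⟩
      rcases h3 with h3 | h3 | h3 <;> omega
    · exact Fin.val_injective.injOn
  · intro x y hx hy h
    simp only [Finset.mem_filter, Finset.mem_univ, true_and] at hx hy
    rcases h.2 with h3 | h3 | h3 <;> omega
  · intro f hf hadj hL
    have : NeZero (2 * k) := ⟨by omega⟩
    simp only [Finset.mem_filter, Finset.mem_univ, true_and] at hL
    have hstep : ∀ i, (f (i + 1)).val / k = (f i).val / k := by
      intro i
      have := hL i
      have := hL (i + 1)
      rcases (hadj i).2 with h3 | h3 | h3 <;> omega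
    have hall : ∀ j : ℕ, (f (j : ZMod (2 * k))).val / k = (f 0).val / k := by
      intro j
      induction j with
      | zero => simp
      | succ j ih => push_cast; rw [hstep, ih]
    have hall' : ∀ i, (f i).val / k = (f 0).val / k := by
      intro i
      have := hall i.val
      rwa [ZMod.natCast_zmod_val] at this
    have hc : (Finset.univ : Finset (ZMod (2 * k))).card ≤
        (Finset.Ico (k * ((f 0).val / k)) (k * ((f 0).val / k) + k)).card := by
      apply Finset.card_le_card_of_injOn (fun i => (f i).val)
      · intro i _
        exact block_mem (by omega) (hall' i)
      · intro i _ j _ hij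
        exact hf (Fin.ext hij)
    rw [Finset.card_univ, ZMod.card] at hc
    simp at hc
    omega

open Classical in
lemma block_deg1 {n k q : ℕ} (hk : 2 ≤ k) (hm : k * q ≤ n) (u : Fin n) (hu : u.val < k * q) :
    (n - k * q) + (k - 1) ≤ (Finset.univ.filter fun v => (blockGraph n k (k * q)).Adj u v).card := by
  have hq : u.val / k < q := Nat.div_lt_of_lt_mul hu
  have hq2 : k * (u.val / k) + k ≤ k * q := by
    calc k * (u.val / k) + k = k * (u.val / k + 1) := by ring
      _ ≤ k * q := Nat.mul_le_mul_left _ hq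
  have h1 : (Finset.Ico (k * q) n ∪ (Finset.Ico (k * (u.val / k)) (k * (u.val / k) + k)).erase u.val).card
      = (n - k * q) + (k - 1) := by
    rw [Finset.card_union_of_disjoint, Finset.card_erase_of_mem (block_mem (by omega) rfl)]
    · simp
    · rw [Finset.disjoint_left]
      intro a ha hb
      simp only [Finset.mem_Ico, Finset.mem_erase] at ha hb
      omega
  rw [← h1, ← Finset.card_map Fin.valEmbedding (s := Finset.univ.filter _)]
  apply Finset.card_le_card
  intro a ha
  have han : a < n := by
    simp only [Finset.mem_union, Finset.mem_Ico, Finset.mem_erase] at ha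
    omega
  simp only [Finset.mem_map, Finset.mem_filter, Finset.mem_univ, true_and, Fin.valEmbedding_apply]
  refine ⟨⟨a, han⟩, ?_, rfl⟩
  rcases Finset.mem_union.1 ha with h | h
  · rw [Finset.mem_Ico] at h
    refine ⟨?_, Or.inr (Or.inl ⟨hu, h.1⟩)⟩
    intro he
    rw [he] at hu
    simp only at hu
    omega
  · rw [Finset.mem_erase, Finset.mem_Ico] at h
    refine ⟨fun he => h.1 (by rw [he]), Or.inl ⟨hu, by simp only; omega, ?_⟩⟩
    simp only
    rw [eq_comm]
    apply Nat.div_eq_of_lt_le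
    · rw [mul_comm]; exact h.2.1
    · rw [Nat.succ_mul, mul_comm]; exact h.2.2

open Classical in
lemma block_deg2 {n k m : ℕ} (_hm : m ≤ n) (u : Fin n) (hu : m ≤ u.val) :
    m ≤ (Finset.univ.filter fun v => (blockGraph n k m).Adj u v).card := by
  have h1 : (Finset.range m).card = m := Finset.card_range m
  conv_lhs => rw [← h1]
  rw [← Finset.card_map Fin.valEmbedding (s := Finset.univ.filter _)]
  apply Finset.card_le_card
  intro a ha
  rw [Finset.mem_range] at ha
  simp only [Finset.mem_map, Finset.mem_filter, Finset.mem_univ, true_and, Fin.valEmbedding_apply]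
  refine ⟨⟨a, by omega⟩, ⟨?_, Or.inr (Or.inr ⟨ha, hu⟩)⟩, rfl⟩
  intro he
  rw [he] at hu
  simp only at hu
  omega

open Classical in
lemma lower_bound {n k : ℕ} (hk : 2 ≤ k) (hn : 0 < n) (G : SimpleGraph (Fin n))
    (hG : IsSpexWheel (2 * k + 1) G) :
    (n : ℝ) ^ 2 / 2 + (k - 1) * n / 2 - 3 * k ^ 2 ≤ lam1 G * n := by
  set q := n / (2 * k) with hq
  set m := k * q with hm
  have hdm := Nat.div_add_mod n (2 * k)
  have hml := Nat.mod_lt n (show 0 < 2 * k by omega)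
  rw [← hq] at hdm
  have h2m : 2 * m + n % (2 * k) = n := by rw [hm]; linarith
  have hmn : m ≤ n := by omega
  have hray := rayleigh hn (blockGraph n k m) (fun _ => 1)
  have hle := hG.2 _ (blockGraph_free (n := n) (m := m) hk)
  have hs : qf (blockGraph n k m) (fun _ => 1) =
      ∑ u, ((Finset.univ.filter fun v => (blockGraph n k m).Adj u v).card : ℝ) := by
    unfold qf
    apply Finset.sum_congr rfl
    intro u _
    simp
  have hlow : ∑ u : Fin n, (if u.val < m then ((n : ℝ) - m + (k - 1)) else m) ≤
      ∑ u, ((Finset.univ.filter fun v => (blockGraph n k m).Adj u v).card : ℝ) := by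
    apply Finset.sum_le_sum
    intro u _
    split_ifs with h
    · have := block_deg1 hk hmn u h
      have h2 : (((n - m) + (k - 1) : ℕ) : ℝ) ≤
        ((Finset.univ.filter fun v => (blockGraph n k m).Adj u v).card : ℝ) := by exact_mod_cast this
      rw [Nat.cast_add, Nat.cast_sub hmn, Nat.cast_sub (by omega)] at h2
      simpa using h2
    · exact_mod_cast block_deg2 hmn u (by omega)
  have hc1 : (Finset.univ.filter fun u : Fin n => u.val < m).card = m := by
    rw [← Finset.card_map Fin.valEmbedding]
    have : (Finset.univ.filter fun u : Fin n => u.val < m).map Fin.valEmbedding = Finset.range m := by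
      ext a
      simp only [Finset.mem_map, Finset.mem_filter, Finset.mem_univ, true_and,
        Fin.valEmbedding_apply, Finset.mem_range]
      constructor
      · rintro ⟨b, hb, rfl⟩; exact hb
      · intro ha; exact ⟨⟨a, by omega⟩, ha, rfl⟩
    rw [this, Finset.card_range]
  have hc2 : (Finset.univ.filter fun u : Fin n => ¬ u.val < m).card = n - m := by
    have := Finset.card_filter_add_card_filter_not (s := (Finset.univ : Finset (Fin n)))
      (fun u : Fin n => u.val < m)
    rw [hc1, Finset.card_univ, Fintype.card_fin] at this
    omega
  rw [Finset.sum_ite, Finset.sum_const, Finset.sum_const, hc1, hc2, nsmul_eq_mul, nsmul_eq_mul,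
    Nat.cast_sub hmn] at hlow
  have h3 : ∑ i : Fin n, (1 : ℝ) ^ 2 = n := by simp
  rw [h3, hs] at hray
  have h4 : lam1 (blockGraph n k m) * n ≤ lam1 G * n :=
    mul_le_mul_of_nonneg_right hle (by positivity)
  have h5 : (n : ℝ) - 2 * m ≤ 2 * k := by
    have : n ≤ 2 * m + 2 * k := by omega
    have : (n : ℝ) ≤ 2 * m + 2 * k := by exact_mod_cast this
    linarith
  have h6 : (0 : ℝ) ≤ n - 2 * m := by
    have : 2 * m ≤ n := by omega
    have : (2 : ℝ) * m ≤ n := by exact_mod_cast this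
    linarith
  have hk' : (2 : ℝ) ≤ k := by exact_mod_cast hk
  nlinarith [mul_nonneg h6 (sub_nonneg.2 h5), mul_nonneg (sub_nonneg.2 h5) (by linarith : (0 : ℝ) ≤ k - 1)]


open Classical in
/-- The number of non-neighbours of `v` in `A`. -/
noncomputable def missN {n : ℕ} (G : SimpleGraph (Fin n)) (A : Finset (Fin n)) (v : Fin n) : ℕ :=
  (A.filter fun u => ¬ G.Adj v u).card

lemma degIn_add_missN {n : ℕ} (G : SimpleGraph (Fin n)) (A : Finset (Fin n)) (v : Fin n) :
    degIn G A v + missN G A v = A.card := by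
  classical
  rw [degIn_eq, missN, Finset.card_filter_add_card_filter_not]

open Classical in
lemma cutCount_eq {n : ℕ} (G : SimpleGraph (Fin n)) (S : Finset (Fin n)) :
    cutCount G S = ∑ v ∈ S, degIn G Sᶜ v := by
  have h1 : cutCount G S = ((Finset.univ : Finset (Fin n × Fin n)).filter
      fun p => G.Adj p.1 p.2 ∧ p.1 ∈ S ∧ p.2 ∉ S).card := by
    unfold cutCount; congr
  rw [h1, Finset.card_filter, Fintype.sum_prod_type, ← Finset.sum_filter_add_sum_filter_not _ (· ∈ S)]
  have h2 : ∑ x ∈ Finset.univ.filter (fun x => ¬ x ∈ S), ∑ y,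
      (if G.Adj x y ∧ x ∈ S ∧ y ∉ S then 1 else 0) = 0 := by
    apply Finset.sum_eq_zero
    intro x hx
    apply Finset.sum_eq_zero
    intro y _
    rw [if_neg]
    intro h
    exact (Finset.mem_filter.1 hx).2 h.2.1
  rw [h2, add_zero]
  apply Finset.sum_congr
  · ext; simp
  · intro x hx
    rw [degIn_eq, Finset.card_filter, ← Finset.sum_filter_add_sum_filter_not Finset.univ (· ∈ Sᶜ)]
    rw [Finset.sum_eq_zero (s := Finset.univ.filter fun x => ¬ x ∈ Sᶜ), add_zero]
    · apply Finset.sum_congr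
      · ext; simp
      · intro y hy
        rw [Finset.mem_compl] at hy
        simp [hx, hy]
    · intro y hy
      simp only [Finset.mem_filter, Finset.mem_univ, true_and, Finset.mem_compl, not_not] at hy
      simp [hy]

lemma double_count {n : ℕ} (G : SimpleGraph (Fin n)) (A B : Finset (Fin n)) :
    ∑ v ∈ A, degIn G B v = ∑ v ∈ B, degIn G A v := by
  classical
  simp only [degIn_eq, Finset.card_filter]
  rw [Finset.sum_comm]
  simp only [G.adj_comm]

lemma cut_symm {n : ℕ} (G : SimpleGraph (Fin n)) (S : Finset (Fin n)) :
    cutCount G Sᶜ = cutCount G S := by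
  rw [cutCount_eq, cutCount_eq, compl_compl, double_count]

lemma maxcut_symm {n : ℕ} {G : SimpleGraph (Fin n)} {L R : Finset (Fin n)}
    (h : IsMaxCut G L R) : IsMaxCut G R L := by
  obtain ⟨rfl, h2⟩ := h
  refine ⟨(compl_compl L).symm, ?_⟩
  intro S'
  rw [cut_symm]
  exact h2 S'

lemma maxcut_deg {n : ℕ} {G : SimpleGraph (Fin n)} {L R : Finset (Fin n)}
    (h : IsMaxCut G L R) (v : Fin n) (hv : v ∈ L) : degIn G L v ≤ degIn G R v := by
  classical
  obtain ⟨rfl, h2⟩ := h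
  have h3 := h2 (L.erase v)
  rw [cutCount_eq, cutCount_eq, ← Finset.add_sum_erase L _ hv] at h3
  have h4 : ∑ u ∈ L.erase v, degIn G (L.erase v)ᶜ u =
      ∑ u ∈ L.erase v, (degIn G Lᶜ u + if G.Adj v u then 1 else 0) := by
    apply Finset.sum_congr rfl
    intro u _
    rw [degIn_eq, degIn_eq]
    have : (L.erase v)ᶜ = insert v Lᶜ := by
      ext a; simp
    rw [this, Finset.filter_insert]
    simp only [G.adj_comm u v]
    split_ifs with h
    · rw [Finset.card_insert_of_notMem]
      simp [hv]
    · simp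
  have h5 : ∑ u ∈ L.erase v, (if G.Adj v u then 1 else 0) = degIn G L v := by
    rw [degIn_eq, Finset.card_filter, ← Finset.add_sum_erase L _ hv]
    simp
  rw [h4, Finset.sum_add_distrib, h5] at h3
  omega

/-- Neighbourhoods are sparse. -/
lemma nbhd_sparse {n k : ℕ} (hk : 2 ≤ k) (δ : ℝ) (G : SimpleGraph (Fin n))
    (hG : WheelFree (2 * k + 1) G)
    (hkst : ∀ A B : Finset (Fin n),
      δ * (n : ℝ) ^ 2 ≤ ∑ b ∈ B, (degIn G A b : ℝ) →
      ∃ S ⊆ A, ∃ T ⊆ B, 2 * k + 1 ≤ S.card ∧ 2 * k + 1 ≤ T.card ∧ ∀ s ∈ S, ∀ t ∈ T, G.Adj s t)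
    (c : Fin n) (A B : Finset (Fin n)) (hA : ∀ a ∈ A, G.Adj c a) (hB : ∀ a ∈ B, G.Adj c a) :
    ∑ b ∈ B, (degIn G A b : ℝ) < δ * (n : ℝ) ^ 2 := by
  by_contra hcon
  push Not at hcon
  obtain ⟨S, hS, T, hT, h1, h2, h3⟩ := hkst A B hcon
  exact hG (wheel_of_bip hk c S T (by omega) h2 h3 (fun a ha => hA a (hS ha))
    (fun a ha => hB a (hT ha)))

open Classical in
lemma nbr_sum_le {n : ℕ} (G : SimpleGraph (Fin n)) (x : Fin n → ℝ) (hx1 : ∀ i, x i ≤ 1)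
    (A : Finset (Fin n)) (v : Fin n) :
    ∑ w ∈ A, (if G.Adj v w then x w else 0) ≤ degIn G A v := by
  rw [degIn_eq, Finset.card_filter, Nat.cast_sum]
  apply Finset.sum_le_sum
  intro w _
  split_ifs
  · simpa using hx1 w
  · simp

open Classical in
lemma nbr_sum_le' {n : ℕ} (G : SimpleGraph (Fin n)) (x : Fin n → ℝ) (hx0 : ∀ i, 0 ≤ x i)
    (A : Finset (Fin n)) (v : Fin n) :
    ∑ w ∈ A, (if G.Adj v w then x w else 0) ≤ ∑ w ∈ A, x w := by
  apply Finset.sum_le_sum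
  intro w _
  split_ifs
  · exact le_rfl
  · exact hx0 w

open Classical in
lemma cut_large {n k : ℕ} (hk : 2 ≤ k) (δ : ℝ) (G : SimpleGraph (Fin n))
    (hG : WheelFree (2 * k + 1) G)
    (hkst : ∀ A B : Finset (Fin n),
      δ * (n : ℝ) ^ 2 ≤ ∑ b ∈ B, (degIn G A b : ℝ) →
      ∃ S ⊆ A, ∃ T ⊆ B, 2 * k + 1 ≤ S.card ∧ 2 * k + 1 ≤ T.card ∧ ∀ s ∈ S, ∀ t ∈ T, G.Adj s t)
    (x : Fin n → ℝ) (hx1 : ∀ i, x i ≤ 1) (z : Fin n) (hz : x z = 1)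
    (heig : ∀ u, ∑ v, (if G.Adj u v then x v else 0) = lam1 G * x u)
    (hlam : (n : ℝ) / 2 ≤ lam1 G) {L R : Finset (Fin n)} (hcut : IsMaxCut G L R) :
    (n : ℝ) ^ 2 / 4 - δ * n ^ 2 ≤ ∑ v ∈ L, (degIn G R v : ℝ) := by
  set N := Finset.univ.filter fun v => G.Adj z v with hN
  have hNadj : ∀ a ∈ N, G.Adj z a := fun a ha => (Finset.mem_filter.1 ha).2
  have hsp := nbhd_sparse hk δ G hG hkst z N N hNadj hNadj
  have h1 : cutCount G N ≤ cutCount G L := hcut.2 N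
  rw [cutCount_eq, cutCount_eq, ← hcut.1] at h1
  have h1' : ∑ v ∈ N, (degIn G Nᶜ v : ℝ) ≤ ∑ v ∈ L, (degIn G R v : ℝ) := by exact_mod_cast h1
  have h2 : lam1 G = ∑ v ∈ N, x v := by
    have := heig z
    rw [hz, mul_one] at this
    rw [← this, hN, Finset.sum_filter]
  have h3 : lam1 G * lam1 G = ∑ v ∈ N, ∑ w, (if G.Adj v w then x w else 0) := by
    calc lam1 G * lam1 G = lam1 G * ∑ v ∈ N, x v := by rw [← h2]
      _ = _ := by
        rw [Finset.mul_sum]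
        exact Finset.sum_congr rfl fun v _ => (heig v).symm
  have h4 : ∑ v ∈ N, ∑ w, (if G.Adj v w then x w else 0) ≤
      ∑ v ∈ N, (degIn G N v : ℝ) + ∑ v ∈ N, (degIn G Nᶜ v : ℝ) := by
    rw [← Finset.sum_add_distrib]
    apply Finset.sum_le_sum
    intro v _
    rw [← Finset.sum_add_sum_compl N]
    exact add_le_add (nbr_sum_le G x hx1 N v) (nbr_sum_le G x hx1 Nᶜ v)
  have h5 : (n : ℝ) ^ 2 / 4 ≤ lam1 G * lam1 G := by
    have : (0 : ℝ) ≤ n := by positivity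
    nlinarith
  linarith

/-- Common neighbours. -/
lemma common_nbrs {n : ℕ} (G : SimpleGraph (Fin n)) (A U : Finset (Fin n)) :
    ∃ C ⊆ A, (∀ a ∈ C, ∀ u ∈ U, G.Adj u a) ∧ A.card ≤ C.card + ∑ u ∈ U, missN G A u := by
  classical
  refine ⟨A.filter fun a => ∀ u ∈ U, G.Adj u a, Finset.filter_subset _ _, ?_, ?_⟩
  · intro a ha; exact (Finset.mem_filter.1 ha).2
  · rw [← Finset.card_filter_add_card_filter_not (s := A) (fun a => ∀ u ∈ U, G.Adj u a)]
    apply Nat.add_le_add_left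
    have : (A.filter fun a => ¬ ∀ u ∈ U, G.Adj u a) ⊆ U.biUnion
        (fun u => A.filter fun a => ¬ G.Adj u a) := by
      intro a ha
      simp only [Finset.mem_filter, Finset.mem_biUnion] at ha ⊢
      obtain ⟨h1, h2⟩ := ha
      push Not at h2
      obtain ⟨u, hu, h⟩ := h2
      exact ⟨u, hu, h1, h⟩
    refine le_trans (Finset.card_le_card this) (le_trans Finset.card_biUnion_le ?_)
    apply le_of_eq
    apply Finset.sum_congr rfl
    intro u _
    unfold missN
    congr

lemma common_nbrs_bound {n : ℕ} (G : SimpleGraph (Fin n)) (A U : Finset (Fin n)) (b : ℝ)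
    (hb : ∀ u ∈ U, (missN G A u : ℝ) ≤ b) :
    ∃ C ⊆ A, (∀ a ∈ C, ∀ u ∈ U, G.Adj u a) ∧ (A.card : ℝ) - U.card * b ≤ C.card := by
  obtain ⟨C, h1, h2, h3⟩ := common_nbrs G A U
  refine ⟨C, h1, h2, ?_⟩
  have h4 : (A.card : ℝ) ≤ C.card + ∑ u ∈ U, (missN G A u : ℝ) := by exact_mod_cast h3
  have h5 : ∑ u ∈ U, (missN G A u : ℝ) ≤ U.card * b := by
    rw [← nsmul_eq_mul, ← Finset.sum_const]
    exact Finset.sum_le_sum hb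
  linarith

lemma part_sizes {n : ℕ} (G : SimpleGraph (Fin n)) {L R : Finset (Fin n)} (hR : R = Lᶜ) (θ : ℝ)
    (hθ : 0 ≤ θ)
    (hcut : (n : ℝ) ^ 2 / 4 - θ ^ 2 * n ^ 2 ≤ ∑ v ∈ L, (degIn G R v : ℝ)) :
    (L.card : ℝ) + R.card = n ∧ ((n : ℝ) / 2 - θ * n ≤ L.card ∧ (L.card : ℝ) ≤ n / 2 + θ * n) ∧
    ∑ v ∈ L, (missN G R v : ℝ) ≤ θ ^ 2 * n ^ 2 := by
  have h1 : (L.card : ℝ) + R.card = n := by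
    have := Finset.card_add_card_compl L
    rw [← hR, Fintype.card_fin] at this
    exact_mod_cast this
  have h2 : ∑ v ∈ L, (degIn G R v : ℝ) + ∑ v ∈ L, (missN G R v : ℝ) = L.card * R.card := by
    rw [← Finset.sum_add_distrib, ← nsmul_eq_mul, ← Finset.sum_const]
    apply Finset.sum_congr rfl
    intro v _
    exact_mod_cast degIn_add_missN G R v
  have h3 : 0 ≤ ∑ v ∈ L, (missN G R v : ℝ) := Finset.sum_nonneg fun _ _ => by positivity
  have h4 : (R.card : ℝ) = n - L.card := by linarith
  rw [h4] at h2
  have h5 : ((L.card : ℝ) - n / 2) ^ 2 ≤ (θ * n) ^ 2 := by nlinarith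
  have h6 := abs_le.1 (abs_le_of_sq_le_sq h5 (by positivity))
  refine ⟨h1, ⟨by linarith [h6.1], by linarith [h6.2]⟩, ?_⟩
  nlinarith [sq_nonneg ((L.card : ℝ) - n / 2)]

lemma internal_small {n k : ℕ} (hk : 2 ≤ k) (θ : ℝ) (hθ : 0 < θ) (hn : 0 < n)
    (G : SimpleGraph (Fin n)) (hG : WheelFree (2 * k + 1) G)
    (hkst : ∀ A B : Finset (Fin n),
      θ ^ 2 * (n : ℝ) ^ 2 ≤ ∑ b ∈ B, (degIn G A b : ℝ) →
      ∃ S ⊆ A, ∃ T ⊆ B, 2 * k + 1 ≤ S.card ∧ 2 * k + 1 ≤ T.card ∧ ∀ s ∈ S, ∀ t ∈ T, G.Adj s t)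
    {L R : Finset (Fin n)} (hcut : IsMaxCut G L R)
    (hmiss : ∑ v ∈ L, (missN G R v : ℝ) ≤ θ ^ 2 * n ^ 2) (v : Fin n) (hv : v ∈ L) :
    (degIn G L v : ℝ) < 2 * θ * n := by
  classical
  by_contra hcon
  push Not at hcon
  have hd : (degIn G L v : ℝ) ≤ degIn G R v := by exact_mod_cast maxcut_deg hcut v hv
  set NL := L.filter fun u => G.Adj v u with hNL
  set NR := R.filter fun u => G.Adj v u with hNR
  have e1 : degIn G L v = NL.card := degIn_eq _ _ _
  have e2 : degIn G R v = NR.card := degIn_eq _ _ _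
  have hsp := nbhd_sparse hk (θ ^ 2) G hG hkst v NR NL
    (fun a ha => (Finset.mem_filter.1 ha).2) (fun a ha => (Finset.mem_filter.1 ha).2)
  have h1 : ∑ b ∈ NL, (degIn G NR b : ℝ) + ∑ b ∈ NL, (missN G NR b : ℝ) = NL.card * NR.card := by
    rw [← Finset.sum_add_distrib, ← nsmul_eq_mul, ← Finset.sum_const]
    apply Finset.sum_congr rfl
    intro v _
    exact_mod_cast degIn_add_missN G NR v
  have h2 : ∑ b ∈ NL, (missN G NR b : ℝ) ≤ ∑ v ∈ L, (missN G R v : ℝ) := by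
    refine le_trans ?_ (Finset.sum_le_sum_of_subset_of_nonneg (show NL ⊆ L from Finset.filter_subset _ _)
      (fun _ _ _ => by positivity))
    apply Finset.sum_le_sum
    intro b _
    have : missN G NR b ≤ missN G R b := by
      unfold missN
      apply Finset.card_le_card
      intro a ha
      have := Finset.mem_filter.1 ha
      exact Finset.mem_filter.2 ⟨(Finset.mem_filter.1 this.1).1, this.2⟩
    exact_mod_cast this
  rw [e1] at hcon hd
  rw [e2] at hd
  have hp : (0 : ℝ) < 2 * θ * n := by positivity
  nlinarith [mul_le_mul hcon (hcon.trans hd) hp.le (by positivity)]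


/-- The graph obtained from `G` by making the neighbourhood of `w` equal to `T`. -/
def rewireGraph {n : ℕ} (G : SimpleGraph (Fin n)) (w : Fin n) (T : Finset (Fin n)) :
    SimpleGraph (Fin n) where
  Adj u v := u ≠ v ∧ ((u ≠ w ∧ v ≠ w ∧ G.Adj u v) ∨ (u = w ∧ v ∈ T) ∨ (v = w ∧ u ∈ T))
  symm := by
    constructor
    intro u v h
    refine ⟨h.1.symm, ?_⟩
    rcases h.2 with h | h | h
    · exact Or.inl ⟨h.2.1, h.1, h.2.2.symm⟩
    · exact Or.inr (Or.inr h)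
    · exact Or.inr (Or.inl h)
  loopless := by
    constructor
    intro u h
    exact h.1 rfl

open Classical in
lemma no_rewire {n k : ℕ} (hn : 0 < n) (G : SimpleGraph (Fin n)) (hG : IsSpexWheel (2 * k + 1) G)
    (x : Fin n → ℝ) (hx0 : ∀ i, 0 ≤ x i)
    (heig : ∀ u, ∑ v, (if G.Adj u v then x v else 0) = lam1 G * x u) (hlam : 0 < lam1 G)
    (L T : Finset (Fin n)) (w : Fin n) (hw : w ∉ T) (b : ℝ) (hb0 : 0 ≤ b)
    (hT : ∀ y ∈ T, (missN G L y : ℝ) ≤ b)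
    (hbig : (2 * k + 1) * b + (2 * k + 1) < L.card) :
    ∑ v ∈ T, x v ≤ lam1 G * x w := by
  by_contra hcon
  push Not at hcon
  have hoff : ∀ u v, u ≠ w → v ≠ w → ((rewireGraph G w T).Adj u v ↔ G.Adj u v) := by
    intro u v hu hv
    simp only [rewireGraph, hu, hv, false_and, or_false, ne_eq, not_false_eq_true, true_and]
    exact ⟨fun h => h.2, fun h => ⟨h.ne, h⟩⟩
  have hon : ∀ y, (rewireGraph G w T).Adj w y ↔ y ∈ T := by
    intro y
    simp only [rewireGraph, ne_eq, not_true_eq_false, false_and, true_and, false_or]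
    constructor
    · rintro ⟨h1, h2 | h2⟩
      · exact h2
      · exact absurd h2.1.symm h1
    · intro h
      exact ⟨fun e => hw (e ▸ h), Or.inl h⟩
  have h1 := rewire_spec hn G (rewireGraph G w T) x w T hw heig hoff hon hlam (hx0 w) hcon
  have h2 : WheelFree (2 * k + 1) (rewireGraph G w T) := by
    refine rewire_free G _ w T hG.1 (fun x y hx hy h => (hoff x y hx hy).1 h)
      (fun y h => (hon y).1 h) ?_
    intro U hU
    obtain ⟨C, hC, hadj, hcard⟩ := common_nbrs_bound G L (U.filter (· ∈ T)) b
      (fun u hu => hT u (Finset.mem_filter.1 hu).2)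
    have hU1 : ((U.filter (· ∈ T)).card : ℝ) ≤ 2 * k + 1 := by
      exact_mod_cast (Finset.card_filter_le _ _).trans hU
    have hU2 : (U.card : ℝ) ≤ 2 * k + 1 := by exact_mod_cast hU
    have : (U.card : ℝ) < C.card := by nlinarith
    obtain ⟨w', hw1, hw2⟩ := Finset.exists_mem_notMem_of_card_lt_card (by exact_mod_cast this : U.card < C.card)
    exact ⟨w', hw2, fun y hy hyT => (hadj w' hw1 y (Finset.mem_filter.2 ⟨hy, hyT⟩)).symm⟩
  exact absurd (hG.2 _ h2) (not_le.2 h1)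

open Classical in
lemma eig_le_deg {n : ℕ} (G : SimpleGraph (Fin n)) (x : Fin n → ℝ) (hx1 : ∀ i, x i ≤ 1)
    (heig : ∀ u, ∑ v, (if G.Adj u v then x v else 0) = lam1 G * x u)
    {L R : Finset (Fin n)} (hR : R = Lᶜ) (w : Fin n) :
    lam1 G * x w ≤ degIn G L w + degIn G R w := by
  rw [← heig w, ← Finset.sum_add_sum_compl L, hR]
  exact add_le_add (nbr_sum_le G x hx1 L w) (nbr_sum_le G x hx1 Lᶜ w)

open Classical in
lemma eig_le_sum {n : ℕ} (G : SimpleGraph (Fin n)) (x : Fin n → ℝ) (hx1 : ∀ i, x i ≤ 1)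
    (hx0 : ∀ i, 0 ≤ x i)
    (heig : ∀ u, ∑ v, (if G.Adj u v then x v else 0) = lam1 G * x u)
    {L R : Finset (Fin n)} (hR : R = Lᶜ) (w : Fin n) :
    lam1 G * x w ≤ degIn G L w + ∑ v ∈ R, x v := by
  rw [← heig w, ← Finset.sum_add_sum_compl L, hR]
  exact add_le_add (nbr_sum_le G x hx1 L w) (nbr_sum_le' G x hx0 Lᶜ w)

open Classical in
lemma miss_small {n k : ℕ} (hn : 0 < n) (G : SimpleGraph (Fin n)) (hG : IsSpexWheel (2 * k + 1) G)
    (x : Fin n → ℝ) (hx0 : ∀ i, 0 ≤ x i) (hx1 : ∀ i, x i ≤ 1)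
    (heig : ∀ u, ∑ v, (if G.Adj u v then x v else 0) = lam1 G * x u)
    (hlam : (n : ℝ) / 2 ≤ lam1 G) {L R : Finset (Fin n)} (hR : R = Lᶜ)
    (z : Fin n) (hzL : z ∈ L) (hz : x z = 1) (θ : ℝ) (hθ : 0 < θ)
    (hL1 : (n : ℝ) / 2 - θ * n ≤ L.card) (hL2 : (L.card : ℝ) ≤ n / 2 + θ * n)
    (hR2 : (R.card : ℝ) ≤ n / 2 + θ * n)
    (hiL : ∀ v ∈ L, (degIn G L v : ℝ) ≤ 2 * θ * n)
    (hiR : ∀ v ∈ R, (degIn G R v : ℝ) ≤ 2 * θ * n)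
    (hM : ∑ v ∈ R, (missN G L v : ℝ) ≤ θ ^ 2 * n ^ 2)
    (hbig : (2 * k + 1) * (6 * θ * n) + (2 * k + 1) < (n : ℝ) / 2 - θ * n) :
    (∀ v ∈ L, (missN G R v : ℝ) ≤ 6 * θ * n) ∧ (∀ v ∈ R, (missN G L v : ℝ) ≤ 6 * θ * n) := by
  have hn' : (0 : ℝ) < n := by exact_mod_cast hn
  have hp : 0 < θ * n := by positivity
  set T := R.filter fun r => (missN G L r : ℝ) ≤ 6 * θ * n with hT
  set S := R.filter fun r => ¬ (missN G L r : ℝ) ≤ 6 * θ * n with hS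
  have hScard : (S.card : ℝ) * (6 * θ * n) ≤ θ ^ 2 * n ^ 2 := by
    refine le_trans ?_ hM
    refine le_trans ?_ (Finset.sum_le_sum_of_subset_of_nonneg (show S ⊆ R from Finset.filter_subset _ _)
      (fun _ _ _ => by positivity))
    rw [← nsmul_eq_mul, ← Finset.sum_const]
    apply Finset.sum_le_sum
    intro r hr
    exact (not_le.1 (Finset.mem_filter.1 hr).2).le
  have hScard' : (S.card : ℝ) ≤ θ * n / 6 := by
    by_contra h
    push Not at h
    nlinarith
  have hsum : ∑ v ∈ R, x v = ∑ v ∈ T, x v + ∑ v ∈ S, x v := by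
    rw [hT, hS, Finset.sum_filter_add_sum_filter_not]
  have hSsum : ∑ v ∈ S, x v ≤ S.card := by
    have := Finset.sum_le_sum (s := S) (fun i _ => hx1 i)
    simpa using this
  have hz1 := eig_le_sum G x hx1 hx0 heig hR z
  rw [hz, mul_one] at hz1
  have hz2 := hiL z hzL
  have key : ∀ w, w ∉ T → ∑ v ∈ T, x v ≤ lam1 G * x w := by
    intro w hw
    exact no_rewire hn G hG x hx0 heig (by linarith) L T w hw (6 * θ * n) (by positivity)
      (fun y hy => (Finset.mem_filter.1 hy).2) (by linarith)
  constructor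
  · intro w hw
    by_contra hcon
    push Not at hcon
    have h1 := key w (by
      intro h
      have := (Finset.mem_filter.1 h).1
      rw [hR, Finset.mem_compl] at this
      exact this hw)
    have h2 := eig_le_deg G x hx1 heig hR w
    have h3 := hiL w hw
    have h4 : (degIn G R w : ℝ) + missN G R w = R.card := by exact_mod_cast degIn_add_missN G R w
    nlinarith
  · intro w hw
    by_contra hcon
    have h1 := key w (fun h => hcon (Finset.mem_filter.1 h).2)
    push Not at hcon
    have h2 := eig_le_deg G x hx1 heig hR w
    have h3 := hiR w hw
    have h4 : (degIn G L w : ℝ) + missN G L w = L.card := by exact_mod_cast degIn_add_missN G L w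
    nlinarith

lemma deg_small {n k : ℕ} (hk : 2 ≤ k) (G : SimpleGraph (Fin n)) (hG : WheelFree (2 * k + 1) G)
    {L R : Finset (Fin n)} (b : ℝ) (hb : 0 ≤ b)
    (hmiss : ∀ v ∈ L, (missN G R v : ℝ) ≤ b)
    (hbig : (2 * k + 1) * b + (2 * k + 1) < R.card) :
    ∀ v ∈ L, degIn G L v ≤ k - 1 := by
  classical
  intro v hv
  by_contra hcon
  rw [degIn_eq] at hcon
  obtain ⟨A, hA, hAc⟩ := Finset.exists_subset_card_eq (show k ≤ (L.filter (G.Adj v ·)).card by omega)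
  have hA1 : ∀ a ∈ A, a ∈ L ∧ G.Adj v a := fun a ha => Finset.mem_filter.1 (hA ha)
  obtain ⟨C, hC, hadj, hcard⟩ := common_nbrs_bound G R (insert v A) b (by
    intro u hu
    rcases Finset.mem_insert.1 hu with rfl | hu
    · exact hmiss _ hv
    · exact hmiss _ (hA1 u hu).1)
  have h1 : ((insert v A).card : ℝ) ≤ 2 * k + 1 := by
    have := Finset.card_insert_le v A
    exact_mod_cast (by omega : (insert v A).card ≤ 2 * k + 1)
  have h2 : ((2 * k + 1 : ℕ) : ℝ) ≤ C.card := by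
    push_cast
    nlinarith
  refine hG (wheel_of_bip hk v A C hAc.ge (by exact_mod_cast h2) ?_ ?_ ?_)
  · intro a ha c hc
    exact hadj c hc a (Finset.mem_insert_of_mem ha)
  · intro a ha
    exact (hA1 a ha).2
  · intro c hc
    exact hadj c hc v (Finset.mem_insert_self _ _)

open Classical in
lemma eig_ge {n : ℕ} (G : SimpleGraph (Fin n)) (x : Fin n → ℝ)
    (hx0 : ∀ i, 0 ≤ x i)
    (heig : ∀ u, ∑ v, (if G.Adj u v then x v else 0) = lam1 G * x u)
    (A : Finset (Fin n)) (w : Fin n) :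
    ∑ v ∈ A.filter (fun v => G.Adj w v), x v ≤ lam1 G * x w := by
  rw [← heig w, Finset.sum_filter]
  apply Finset.sum_le_sum_of_subset_of_nonneg (Finset.subset_univ _)
  intro i _ _
  split_ifs
  · exact hx0 i
  · exact le_rfl

open Classical in
lemma x_large {n k : ℕ} (hn : 0 < n) (G : SimpleGraph (Fin n))
    (x : Fin n → ℝ) (hx0 : ∀ i, 0 ≤ x i) (hx1 : ∀ i, x i ≤ 1)
    (heig : ∀ u, ∑ v, (if G.Adj u v then x v else 0) = lam1 G * x u)
    (hlam : (n : ℝ) / 2 ≤ lam1 G) {L R : Finset (Fin n)} (hR : R = Lᶜ)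
    (z : Fin n) (hzL : z ∈ L) (hz : x z = 1) (θ : ℝ) (hθ : 0 < θ) (hθ1 : θ ≤ 1 / 100)
    (hL1 : (n : ℝ) / 2 - θ * n ≤ L.card)
    (hR2 : (R.card : ℝ) ≤ n / 2 + θ * n)
    (hiL : ∀ v ∈ L, (degIn G L v : ℝ) ≤ k) (hkn : (k : ℝ) ≤ θ * n)
    (hmL : ∀ v ∈ L, (missN G R v : ℝ) ≤ 6 * θ * n)
    (hmR : ∀ v ∈ R, (missN G L v : ℝ) ≤ 6 * θ * n) :
    ∀ v, 1 - 34 * θ ≤ x v := by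
  have hn' : (0 : ℝ) < n := by exact_mod_cast hn
  have hp : 0 < θ * n := by positivity
  have hz1 := eig_le_sum G x hx1 hx0 heig hR z
  rw [hz, mul_one] at hz1
  have hz2 := hiL z hzL
  have hY : ∑ v ∈ R, x v ≤ R.card := by
    have := Finset.sum_le_sum (s := R) (fun i _ => hx1 i)
    simpa using this
  have hup : lam1 G ≤ n / 2 + 2 * θ * n := by linarith
  have hLx : ∀ v ∈ L, 1 - 14 * θ ≤ x v := by
    intro v hv
    have h1 := eig_ge G x hx0 heig R v
    have h2 : ∑ w ∈ R, x w ≤ ∑ w ∈ R.filter (fun w => G.Adj v w), x w + 6 * θ * n := by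
      rw [← Finset.sum_filter_add_sum_filter_not R (fun w => G.Adj v w)]
      have : ∑ w ∈ R.filter (fun w => ¬ G.Adj v w), x w ≤ missN G R v := by
        have := Finset.sum_le_sum (s := R.filter (fun w => ¬ G.Adj v w)) (fun i _ => hx1 i)
        simpa [missN] using this
      linarith [hmL v hv]
    have h3 : lam1 G - 7 * θ * n ≤ lam1 G * x v := by linarith
    have h4 : 7 * θ * n ≤ lam1 G * (14 * θ) := by nlinarith
    have h5 : lam1 G * (1 - 14 * θ) ≤ lam1 G * x v := by linarith
    exact le_of_mul_le_mul_left h5 (by linarith)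
  intro v
  by_cases hv : v ∈ L
  · linarith [hLx v hv]
  · have hvR : v ∈ R := by rw [hR, Finset.mem_compl]; exact hv
    have h1 := eig_ge G x hx0 heig L v
    have h2 : (degIn G L v : ℝ) * (1 - 14 * θ) ≤ ∑ w ∈ L.filter (fun w => G.Adj v w), x w := by
      rw [degIn_eq, ← nsmul_eq_mul, ← Finset.sum_const]
      apply Finset.sum_le_sum
      intro w hw
      exact hLx w (Finset.mem_filter.1 hw).1
    have h3 : (degIn G L v : ℝ) + missN G L v = L.card := by exact_mod_cast degIn_add_missN G L v
    have h4 := hmR v hvR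
    have h5 : (n : ℝ) / 2 - 7 * θ * n ≤ degIn G L v := by linarith
    have h6 : ((n : ℝ) / 2 - 7 * θ * n) * (1 - 14 * θ) ≤ lam1 G * x v := by
      refine le_trans (mul_le_mul_of_nonneg_right h5 (by linarith)) (h2.trans h1)
    have h7 : lam1 G * x v ≤ (n / 2 + 2 * θ * n) * x v := mul_le_mul_of_nonneg_right hup (hx0 v)
    have h8 : (n : ℝ) * ((1 / 2 - 7 * θ) * (1 - 14 * θ)) ≤ n * ((1 / 2 + 2 * θ) * x v) := by nlinarith
    have h9 := le_of_mul_le_mul_left h8 hn'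
    by_contra hcon
    push Not at hcon
    nlinarith


lemma one_edge {n k : ℕ} (hk : 3 ≤ k) (G : SimpleGraph (Fin n)) (hG : WheelFree (2 * k + 1) G)
    (v : Fin n) (A R' : Finset (Fin n)) (hA : A.card = k - 1) (hvA : ∀ a ∈ A, G.Adj v a)
    (hvR : ∀ r ∈ R', G.Adj v r) (hAR : ∀ a ∈ A, ∀ r ∈ R', G.Adj a r)
    (hcard : 2 * k + 1 ≤ R'.card) :
    ∃ a b, ∀ x y, x ∈ R' → y ∈ R' → G.Adj x y → (x = a ∧ y = b) ∨ (x = b ∧ y = a) := by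
  classical
  have hd : ∀ a ∈ A, a ∉ R' := fun a ha h => G.loopless.irrefl _ (hAR a ha a h)
  have noP3 : ∀ r s t, r ∈ R' → s ∈ R' → t ∈ R' → G.Adj r s → G.Adj s t → r = t := by
    intro r s t hr hs ht h1 h2
    by_contra hne
    refine hG (wheel_pre (by omega) v R' [r, s, t] A.toList (by simp) ?_ ?_ ?_ (by simpa using hr)
      (by simpa using ht) ?_ (Finset.nodup_toList _) ?_ ?_ ?_ hvR ?_ hcard)
    · intro h
      have := congrArg List.length h
      simp at this
      rw [this] at hA
      simp at hA; omega
    · simp [h1.ne, h2.ne, hne]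
    · simp [h1, h2]
    · intro a ha hmem
      have := hd a (by simpa using ha)
      simp at hmem
      rcases hmem with rfl | rfl | rfl <;> contradiction
    · intro a ha
      exact hAR a (by simpa using ha)
    · intro a ha
      simp at ha
      rcases ha with rfl | rfl | rfl
      · exact hvR _ hr
      · exact hvR _ hs
      · exact hvR _ ht
    · intro a ha
      exact hvA a (by simpa using ha)
    · simp [hA]; omega
  have no2K2 : ∀ r s t u, r ∈ R' → s ∈ R' → t ∈ R' → u ∈ R' → G.Adj r s → G.Adj t u →
      r ≠ t → r ≠ u → s ≠ t → s ≠ u → False := by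
    intro r s t u hr hs ht hu h1 h2 n1 n2 n3 n4
    obtain ⟨a0, ha0⟩ : A.Nonempty := Finset.card_pos.1 (by omega)
    have m0 := hd a0 ha0
    have e1 : r ≠ a0 := fun h => m0 (h ▸ hr)
    have e2 : s ≠ a0 := fun h => m0 (h ▸ hs)
    have e3 : a0 ≠ t := fun h => m0 (h ▸ ht)
    have e4 : a0 ≠ u := fun h => m0 (h ▸ hu)
    have hc : (A.erase a0).card = k - 2 := by rw [Finset.card_erase_of_mem ha0]; omega
    refine hG (wheel_pre (by omega) v R' [r, s, a0, t, u] (A.erase a0).toList (by simp) ?_ ?_ ?_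
      (by simpa using hr) (by simpa using hu) ?_ (Finset.nodup_toList _) ?_ ?_ ?_ hvR ?_ hcard)
    · intro h
      have := congrArg List.length h
      rw [Finset.length_toList] at this
      simp only [List.length_nil] at this
      omega
    · simp [h1.ne, h2.ne, n1, n2, n3, n4, e1, e2, e3, e4]
    · simp [h1, h2, (hAR a0 ha0 s hs).symm, hAR a0 ha0 t ht]
    · intro a ha hmem
      have ha' := Finset.mem_toList.1 ha
      have := hd a (Finset.mem_of_mem_erase ha')
      have hne := Finset.ne_of_mem_erase ha'
      simp at hmem
      rcases hmem with rfl | rfl | rfl | rfl | rfl <;> contradiction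
    · intro a ha
      exact hAR a (Finset.mem_of_mem_erase (Finset.mem_toList.1 ha))
    · intro a ha
      simp at ha
      rcases ha with rfl | rfl | rfl | rfl | rfl
      · exact hvR _ hr
      · exact hvR _ hs
      · exact hvA _ ha0
      · exact hvR _ ht
      · exact hvR _ hu
    · intro a ha
      exact hvA a (Finset.mem_of_mem_erase (Finset.mem_toList.1 ha))
    · rw [Finset.length_toList, hc]; simp; omega
  by_cases hex : ∃ a ∈ R', ∃ b ∈ R', G.Adj a b
  · obtain ⟨a, ha, b, hb, hab⟩ := hex
    refine ⟨a, b, ?_⟩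
    intro x y hx hy hxy
    by_cases h1 : x = a
    · subst h1
      exact Or.inl ⟨rfl, noP3 y x b hy hx hb hxy.symm hab⟩
    by_cases h2 : x = b
    · subst h2
      exact Or.inr ⟨rfl, noP3 y x a hy hx ha hxy.symm hab.symm⟩
    by_cases h3 : y = a
    · subst h3
      exact absurd (noP3 x y b hx hy hb hxy hab) h2
    by_cases h4 : y = b
    · subst h4
      exact absurd (noP3 x y a hx hy ha hxy hab.symm) h1
    exact (no2K2 x y a b hx hy ha hb hxy hab h1 h2 h3 h4).elim
  · push Not at hex
    exact ⟨v, v, fun x y hx hy h => (hex x hx y hy h).elim⟩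

lemma degIn_mono_add {n : ℕ} (G : SimpleGraph (Fin n)) (A B : Finset (Fin n)) (hAB : A ⊆ B) (v : Fin n) :
    degIn G B v = degIn G A v + degIn G (B \ A) v := by
  classical
  rw [degIn_eq, degIn_eq, degIn_eq, ← Finset.card_union_of_disjoint, ← Finset.filter_union,
    Finset.union_sdiff_of_subset hAB]
  exact Finset.disjoint_filter_filter Finset.disjoint_sdiff

lemma inner_R_bound {n : ℕ} (d : ℕ) (G : SimpleGraph (Fin n)) (R R' : Finset (Fin n)) (hR' : R' ⊆ R)
    (hdeg : ∀ r ∈ R, degIn G R r ≤ d) (a b : Fin n)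
    (hab : ∀ x y, x ∈ R' → y ∈ R' → G.Adj x y → (x = a ∧ y = b) ∨ (x = b ∧ y = a)) :
    ∑ r ∈ R, degIn G R r ≤ 2 + 2 * d * (R \ R').card := by
  classical
  rw [← Finset.sum_sdiff hR']
  have h1 : ∑ r ∈ R \ R', degIn G R r ≤ d * (R \ R').card := by
    rw [mul_comm, ← smul_eq_mul, ← Finset.sum_const]
    exact Finset.sum_le_sum fun r hr => hdeg r (Finset.mem_sdiff.1 hr).1
  have h2 : ∑ r ∈ R', degIn G R r = ∑ r ∈ R', degIn G R' r + ∑ r ∈ R', degIn G (R \ R') r := by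
    rw [← Finset.sum_add_distrib]
    exact Finset.sum_congr rfl fun r _ => degIn_mono_add G R' R hR' r
  have h3 : ∑ r ∈ R', degIn G (R \ R') r ≤ d * (R \ R').card := by
    rw [double_count]
    refine le_trans (Finset.sum_le_sum fun r _ => ?_) h1
    rw [degIn_mono_add G R' R hR' r]; omega
  have h4 : ∑ r ∈ R', degIn G R' r ≤ 2 := by
    have : ∑ r ∈ R', degIn G R' r = ((R' ×ˢ R').filter fun p => G.Adj p.1 p.2).card := by
      rw [Finset.card_filter, Finset.sum_product]
      apply Finset.sum_congr rfl
      intro r _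
      rw [degIn_eq, Finset.card_filter]
    rw [this]
    refine le_trans (Finset.card_le_card (t := {(a, b), (b, a)}) ?_) Finset.card_le_two
    rintro ⟨x, y⟩ h
    simp only [Finset.mem_filter, Finset.mem_product] at h
    have := hab x y h.1.1 h.1.2 h.2
    simp only [Finset.mem_insert, Finset.mem_singleton, Prod.mk.injEq]
    exact this
  nlinarith

open Classical in
lemma count_main {n : ℕ} (hn : 0 < n) (G : SimpleGraph (Fin n))
    (x : Fin n → ℝ) (τ : ℝ) (hτ1 : τ ≤ 1) (hx0 : ∀ i, 1 - τ ≤ x i) (hx1 : ∀ i, x i ≤ 1)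
    (heig : ∀ u, ∑ v, (if G.Adj u v then x v else 0) = lam1 G * x u)
    (hlam : (n : ℝ) / 2 ≤ lam1 G) {L R : Finset (Fin n)} (hR : R = Lᶜ) :
    (1 - τ) ^ 2 * ((lam1 G - n / 2) * n) ≤ ∑ v ∈ L, (degIn G L v : ℝ) + ∑ v ∈ R, (degIn G R v : ℝ)
      - 2 * (1 - τ) ^ 2 * ∑ v ∈ L, (missN G R v : ℝ) := by
  have hxn : ∀ i, 0 ≤ x i := fun i => by linarith [hx0 i]
  have hq := qf_eigen G x _ heig
  set E : Finset (Fin n) → Finset (Fin n) → ℝ :=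
    fun A B => ∑ u ∈ A, ∑ v ∈ B, if G.Adj u v then x u * x v else 0 with hE
  have hqs : qf G x = E L L + E L R + (E R L + E R R) := by
    have e1 : ∀ A : Finset (Fin n), E A L + E A R = ∑ u ∈ A, ∑ v, if G.Adj u v then x u * x v else 0 := by
      intro A
      rw [hE, ← Finset.sum_add_distrib]
      apply Finset.sum_congr rfl
      intro u _
      rw [hR, Finset.sum_add_sum_compl]
    rw [e1, e1, hR, Finset.sum_add_sum_compl]
    unfold qf
    rfl
  have hsym : E R L = E L R := by
    simp only [hE]
    rw [Finset.sum_comm]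
    apply Finset.sum_congr rfl
    intro u _
    apply Finset.sum_congr rfl
    intro v _
    simp only [G.adj_comm v u, mul_comm]
  have hinner : ∀ A, E A A ≤ ∑ v ∈ A, (degIn G A v : ℝ) := by
    intro A
    apply Finset.sum_le_sum
    intro u _
    refine le_trans ?_ (nbr_sum_le G x hx1 A u)
    apply Finset.sum_le_sum
    intro v _
    split_ifs
    · have := hx1 u
      nlinarith [hxn v]
    · exact le_rfl
  have hcross : E L R ≤ (∑ u ∈ L, x u) * (∑ v ∈ R, x v) - (1 - τ) ^ 2 * ∑ v ∈ L, (missN G R v : ℝ) := by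
    rw [Finset.sum_mul_sum, Finset.mul_sum, ← Finset.sum_sub_distrib]
    apply Finset.sum_le_sum
    intro u _
    have : (missN G R u : ℝ) = ∑ v ∈ R, if G.Adj u v then (0 : ℝ) else 1 := by
      rw [missN, Finset.card_filter, Nat.cast_sum]
      apply Finset.sum_congr rfl
      intro v _
      split_ifs <;> simp_all
    rw [this, Finset.mul_sum, ← Finset.sum_sub_distrib]
    apply Finset.sum_le_sum
    intro v _
    split_ifs
    · simp
    · have := hx0 u
      have := hx0 v
      nlinarith
  set XL := ∑ u ∈ L, x u with hXL
  set XR := ∑ u ∈ R, x u with hXR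
  set P := ∑ u ∈ L, x u ^ 2 with hP
  set Q := ∑ u ∈ R, x u ^ 2 with hQ
  have hPQ : ∑ i, x i ^ 2 = P + Q := by
    rw [hP, hQ, hR, Finset.sum_add_sum_compl]
  have c1 : XL ^ 2 ≤ L.card * P := sq_sum_le_card_mul_sum_sq
  have c2 : XR ^ 2 ≤ R.card * Q := sq_sum_le_card_mul_sum_sq
  have hP0 : 0 ≤ P := Finset.sum_nonneg fun _ _ => sq_nonneg _
  have hQ0 : 0 ≤ Q := Finset.sum_nonneg fun _ _ => sq_nonneg _
  have hLR : (L.card : ℝ) + R.card = n := by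
    have := Finset.card_add_card_compl L
    rw [← hR, Fintype.card_fin] at this
    exact_mod_cast this
  have c3 : XL * XR ≤ n / 2 * ((P + Q) / 2) := by
    refine (abs_le.1 (abs_le_of_sq_le_sq ?_ (by positivity))).2
    have d1 : (XL * XR) ^ 2 ≤ (L.card * P) * (R.card * Q) := by
      rw [mul_pow]
      exact mul_le_mul c1 c2 (sq_nonneg _) (by positivity)
    have d2 : (L.card : ℝ) * R.card ≤ (n / 2) ^ 2 := by
      rw [← hLR]
      nlinarith [sq_nonneg ((L.card : ℝ) - R.card)]
    have d3 : P * Q ≤ ((P + Q) / 2) ^ 2 := by nlinarith [sq_nonneg (P - Q)]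
    calc (XL * XR) ^ 2 ≤ (L.card * P) * (R.card * Q) := d1
      _ = (L.card * R.card) * (P * Q) := by ring
      _ ≤ (n / 2) ^ 2 * ((P + Q) / 2) ^ 2 := mul_le_mul d2 d3 (by positivity) (by positivity)
      _ = _ := by ring
  have hS : (1 - τ) ^ 2 * n ≤ P + Q := by
    rw [← hPQ]
    have : ∑ i : Fin n, (1 - τ) ^ 2 ≤ ∑ i, x i ^ 2 := by
      apply Finset.sum_le_sum
      intro i _
      have := hx0 i
      nlinarith
    simpa [mul_comm] using this
  have h1 := hinner L
  have h2 := hinner R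
  rw [hPQ] at hq
  have h3 : (lam1 G - n / 2) * ((1 - τ) ^ 2 * n) ≤ (lam1 G - n / 2) * (P + Q) :=
    mul_le_mul_of_nonneg_left hS (by linarith)
  nlinarith


/-- Existence of a vertex of full internal degree whose closed neighbourhood is complete to `R`. -/
lemma exists_full {n k : ℕ} (hk : 1 ≤ k) (G : SimpleGraph (Fin n)) (L R : Finset (Fin n))
    (hdeg : ∀ v ∈ L, degIn G L v ≤ k - 1)
    (h : ∑ v ∈ L, (k - 1 - degIn G L v) + k * ∑ v ∈ L, missN G R v < L.card) :
    ∃ v ∈ L, degIn G L v = k - 1 ∧ missN G R v = 0 ∧ ∀ u ∈ L, G.Adj v u → missN G R u = 0 := by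
  classical
  by_contra hcon
  push Not at hcon
  have h1 : ∀ v ∈ L, 1 ≤ (k - 1 - degIn G L v) + missN G R v +
      ∑ u ∈ L, (if G.Adj v u then missN G R u else 0) := by
    intro v hv
    by_contra hlt
    have h2 : k - 1 - degIn G L v = 0 := by omega
    have h3 : missN G R v = 0 := by omega
    have h4 : ∑ u ∈ L, (if G.Adj v u then missN G R u else 0) = 0 := by omega
    have h5 := hdeg v hv
    obtain ⟨u, hu, huv, hne⟩ := hcon v hv (by omega) h3
    have := Finset.sum_eq_zero_iff.1 h4 u hu
    rw [if_pos huv] at this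
    exact hne this
  have h2 := Finset.sum_le_sum h1
  rw [Finset.sum_add_distrib, Finset.sum_add_distrib, Finset.sum_comm] at h2
  have h3 : ∑ u ∈ L, ∑ v ∈ L, (if G.Adj v u then missN G R u else 0) ≤
      ∑ u ∈ L, (k - 1) * missN G R u := by
    apply Finset.sum_le_sum
    intro u hu
    have : ∑ v ∈ L, (if G.Adj v u then missN G R u else 0) = degIn G L u * missN G R u := by
      rw [← Finset.sum_filter, Finset.sum_const, smul_eq_mul, degIn_eq]
      simp only [G.adj_comm]
    rw [this]
    exact Nat.mul_le_mul_right _ (hdeg u hu)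
  rw [← Finset.mul_sum] at h3
  simp only [Finset.sum_const, smul_eq_mul, mul_one] at h2
  obtain ⟨j, rfl⟩ : ∃ j, k = j + 1 := ⟨k - 1, by omega⟩
  simp only [Nat.add_sub_cancel] at *
  nlinarith

lemma miss_double {n : ℕ} (G : SimpleGraph (Fin n)) (A B : Finset (Fin n)) :
    ∑ v ∈ A, (missN G B v : ℝ) = ∑ v ∈ B, (missN G A v : ℝ) := by
  classical
  simp only [missN, Finset.card_filter, Nat.cast_sum]
  rw [Finset.sum_comm]
  simp only [G.adj_comm]

lemma adj_of_miss_zero {n : ℕ} (G : SimpleGraph (Fin n)) (A : Finset (Fin n)) (v : Fin n)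
    (h : missN G A v = 0) : ∀ a ∈ A, G.Adj v a := by
  classical
  intro a ha
  by_contra hcon
  rw [missN, Finset.card_eq_zero] at h
  have : a ∈ A.filter fun u => ¬ G.Adj v u := Finset.mem_filter.2 ⟨ha, hcon⟩
  rw [h] at this
  simp at this

open Classical in
lemma basic_structure (k : ℕ) (hk : 3 ≤ k) (θ : ℝ) (hθ : θ = 1 / (1000 * (k : ℝ) ^ 3)) :
    ∃ N : ℕ, ∀ n : ℕ, N ≤ n → ∀ G : SimpleGraph (Fin n), IsSpexWheel (2 * k + 1) G →
      ∀ L R : Finset (Fin n), IsMaxCut G L R →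
      0 < n ∧ 5 * k ^ 2 ≤ θ * n ∧ (n : ℝ) / 2 ≤ lam1 G ∧
      (n : ℝ) / 2 - θ * n ≤ L.card ∧ (L.card : ℝ) ≤ n / 2 + θ * n ∧
      (n : ℝ) / 2 - θ * n ≤ R.card ∧
      (∀ v ∈ L, (missN G R v : ℝ) ≤ 6 * θ * n) ∧ (∀ v ∈ R, (missN G L v : ℝ) ≤ 6 * θ * n) ∧
      (∀ v ∈ L, degIn G L v ≤ k - 1) ∧ (∀ v ∈ R, degIn G R v ≤ k - 1) ∧
      ∃ x : Fin n → ℝ, (∀ v, 1 - 34 * θ ≤ x v) ∧ (∀ v, x v ≤ 1) ∧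
        ∀ u, ∑ v, (if G.Adj u v then x v else 0) = lam1 G * x u := by
  have hk' : (3 : ℝ) ≤ k := by exact_mod_cast hk
  have hk3 : (27 : ℝ) ≤ (k : ℝ) ^ 3 := by
    have := pow_le_pow_left₀ (by norm_num) hk' 3
    norm_num at this
    exact this
  have hθ0 : 0 < θ := by rw [hθ]; positivity
  have hθk : θ * (1000 * (k : ℝ) ^ 3) = 1 := by rw [hθ]; field_simp
  have hθ1 : θ ≤ 1 / 100 := by nlinarith
  have hθk1 : θ * (9000 * k) ≤ 1 := by
    rw [← hθk]
    apply mul_le_mul_of_nonneg_left _ hθ0.le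
    nlinarith [mul_nonneg (by linarith : (0:ℝ) ≤ k) (by nlinarith : (0 : ℝ) ≤ (k:ℝ) ^ 2 - 9)]
  obtain ⟨N1, hN1⟩ := kst (2 * k + 1) (by omega) (θ ^ 2) (by positivity)
  obtain ⟨N2, hN2⟩ := exists_nat_gt (5 * (k : ℝ) ^ 2 / θ)
  refine ⟨max N1 (N2 + 1), ?_⟩
  intro n hn G hG L R hcut
  have hn1 : N1 ≤ n := le_trans (le_max_left _ _) hn
  have hn2 : N2 + 1 ≤ n := le_trans (le_max_right _ _) hn
  have hn0 : 0 < n := by omega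
  have hnR : (0 : ℝ) < n := by exact_mod_cast hn0
  have hkn : 5 * (k : ℝ) ^ 2 ≤ θ * n := by
    have h1 : 5 * (k : ℝ) ^ 2 / θ ≤ n := by
      have : (N2 : ℝ) ≤ n := by exact_mod_cast (by omega : N2 ≤ n)
      linarith
    rw [div_le_iff₀ hθ0] at h1
    linarith
  have hkst : ∀ A B : Finset (Fin n),
      θ ^ 2 * (n : ℝ) ^ 2 ≤ ∑ b ∈ B, (degIn G A b : ℝ) →
      ∃ S ⊆ A, ∃ T ⊆ B, 2 * k + 1 ≤ S.card ∧ 2 * k + 1 ≤ T.card ∧ ∀ s ∈ S, ∀ t ∈ T, G.Adj s t := by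
    intro A B h
    apply hN1 n hn1 G A B
    simp only [degIn_eq] at h
    convert h
  have hlb := lower_bound (by omega) hn0 G hG
  have hlam : (n : ℝ) / 2 ≤ lam1 G := by
    have h1 : (n : ℝ) / 2 * n ≤ lam1 G * n := by nlinarith
    exact le_of_mul_le_mul_right h1 hnR
  obtain ⟨x, hx0, hx1, ⟨z, hz⟩, heig⟩ := perron hn0 G
  have hcut' := maxcut_symm hcut
  have hbigc : (2 * k + 1) * (6 * θ * n) + (2 * k + 1) < (n : ℝ) / 2 - θ * n := by
    have : θ * (9000 * k) * n ≤ 1 * n := mul_le_mul_of_nonneg_right hθk1 hnR.le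
    have h2 : (2 * (k : ℝ) + 1) ≤ θ * n := by nlinarith
    have h3 : θ * n ≤ θ * k * n := by
      have : 0 < θ * n := by positivity
      nlinarith
    nlinarith
  have hcl := cut_large (by omega) (θ ^ 2) G hG.1 hkst x hx1 z hz heig hlam hcut
  have hcl' := cut_large (by omega) (θ ^ 2) G hG.1 hkst x hx1 z hz heig hlam hcut'
  obtain ⟨hLR, ⟨hL1, hL2⟩, hM⟩ := part_sizes G hcut.1 θ hθ0.le hcl
  obtain ⟨-, ⟨hR1, hR2⟩, hM'⟩ := part_sizes G hcut'.1 θ hθ0.le hcl'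
  have hiL : ∀ v ∈ L, (degIn G L v : ℝ) ≤ 2 * θ * n := fun v hv =>
    (internal_small (by omega) θ hθ0 hn0 G hG.1 hkst hcut hM v hv).le
  have hiR : ∀ v ∈ R, (degIn G R v : ℝ) ≤ 2 * θ * n := fun v hv =>
    (internal_small (by omega) θ hθ0 hn0 G hG.1 hkst hcut' hM' v hv).le
  have hmiss : (∀ v ∈ L, (missN G R v : ℝ) ≤ 6 * θ * n) ∧
      (∀ v ∈ R, (missN G L v : ℝ) ≤ 6 * θ * n) := by
    by_cases hzL : z ∈ L
    · exact miss_small hn0 G hG x hx0 hx1 heig hlam hcut.1 z hzL hz θ hθ0 hL1 hL2 hR2 hiL hiR hM'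
        hbigc
    · have hzR : z ∈ R := by rw [hcut.1, Finset.mem_compl]; exact hzL
      exact (miss_small hn0 G hG x hx0 hx1 heig hlam hcut'.1 z hzR hz θ hθ0 hR1 hR2 hL2 hiR hiL hM
        hbigc).symm
  have hdL := deg_small (by omega) G hG.1 (6 * θ * n) (by positivity) hmiss.1 (by linarith)
  have hdR := deg_small (by omega) G hG.1 (6 * θ * n) (by positivity) hmiss.2 (by linarith)
  refine ⟨hn0, hkn, hlam, hL1, hL2, hR1, hmiss.1, hmiss.2, hdL, hdR, x, ?_, hx1, heig⟩
  have hkn' : (k : ℝ) ≤ θ * n := by nlinarith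
  have cst : ∀ (A : Finset (Fin n)), (∀ v ∈ A, degIn G A v ≤ k - 1) → ∀ v ∈ A, (degIn G A v : ℝ) ≤ k := by
    intro A h v hv
    exact_mod_cast (h v hv).trans (by omega)
  by_cases hzL : z ∈ L
  · exact x_large hn0 G x hx0 hx1 heig hlam hcut.1 z hzL hz θ hθ0 hθ1 hL1 hR2 (cst L hdL) hkn'
      hmiss.1 hmiss.2
  · have hzR : z ∈ R := by rw [hcut.1, Finset.mem_compl]; exact hzL
    exact x_large hn0 G x hx0 hx1 heig hlam hcut'.1 z hzR hz θ hθ0 hθ1 hR1 hL2 (cst R hdR) hkn'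
      hmiss.2 hmiss.1

set_option maxHeartbeats 400000 in
open Classical in
lemma main_structure (k : ℕ) (hk : 3 ≤ k) :
    ∃ N : ℕ, ∀ n : ℕ, N ≤ n → ∀ G : SimpleGraph (Fin n), IsSpexWheel (2 * k + 1) G →
      ∀ L R : Finset (Fin n), IsMaxCut G L R →
      (∃ v ∈ L, degIn G L v = k - 1) →
      0 < n ∧ (∀ v ∈ L, degIn G L v ≤ k - 1) ∧
      (∀ U ⊆ L, U.card ≤ 2 * k → ∃ r ∈ R, ∀ u ∈ U, G.Adj u r) ∧
      (∃ a b, ∀ x y, x ∈ R → y ∈ R → G.Adj x y → (x = a ∧ y = b) ∨ (x = b ∧ y = a)) ∧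
      ∃ x : Fin n → ℝ, (∀ v, 19 / 20 ≤ x v) ∧ (∀ v, x v ≤ 1) ∧
        ∀ u, ∑ v, (if G.Adj u v then x v else 0) = lam1 G * x u := by
  obtain ⟨θ, hθ⟩ : ∃ θ : ℝ, θ = 1 / (1000 * (k : ℝ) ^ 3) := ⟨_, rfl⟩
  obtain ⟨N, hN⟩ := basic_structure k hk θ hθ
  refine ⟨N, ?_⟩
  intro n hn G hG L R hcut ⟨v, hvL, hvd⟩
  obtain ⟨hn0, hkn, hlam, hL1, hL2, hR1, hmL, hmR, hdL, hdR, x, hx0, hx1, heig⟩ :=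
    hN n hn G hG L R hcut
  have hk' : (3 : ℝ) ≤ k := by exact_mod_cast hk
  have hθ0 : 0 < θ := by rw [hθ]; positivity
  have hθk : θ * (1000 * (k : ℝ) ^ 3) = 1 := by rw [hθ]; field_simp
  have hnR : (0 : ℝ) < n := by exact_mod_cast hn0
  have hp : 0 < θ * n := by positivity
  have hk3 : (27 : ℝ) ≤ (k : ℝ) ^ 3 := by
    have := pow_le_pow_left₀ (by norm_num) hk' 3
    norm_num at this
    exact this
  have hθ1 : θ ≤ 1 / 27000 := by nlinarith
  have hnθ : θ * n * (1000 * (k : ℝ) ^ 3) = n := by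
    calc _ = θ * (1000 * (k : ℝ) ^ 3) * n := by ring
      _ = n := by rw [hθk, one_mul]
  have hkk : (9 : ℝ) * k ≤ (k : ℝ) ^ 3 := by
    nlinarith [mul_nonneg (by linarith : (0:ℝ) ≤ k) (by nlinarith : (0 : ℝ) ≤ (k:ℝ) ^ 2 - 9)]
  have hnk : 9000 * k * (θ * n) ≤ n := by nlinarith
  have h2k1 : (2 * (k : ℝ) + 1) ≤ θ * n := by nlinarith
  have hkp : θ * n ≤ k * (θ * n) := by nlinarith
  -- first estimate for `R`
  set A := L.filter fun u => G.Adj v u with hA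
  have hAc : A.card = k - 1 := by rw [← hvd, degIn_eq]
  have hAm : ∀ a ∈ A, a ∈ L ∧ G.Adj v a := fun a ha => Finset.mem_filter.1 ha
  obtain ⟨R', hR'R, hR'adj, hR'c⟩ := common_nbrs_bound G R (insert v A) (6 * θ * n) (by
    intro u hu
    rcases Finset.mem_insert.1 hu with rfl | hu
    · exact hmL _ hvL
    · exact hmL _ (hAm u hu).1)
  have hUc : ((insert v A).card : ℝ) ≤ k := by
    have := Finset.card_insert_le v A
    exact_mod_cast (by omega : (insert v A).card ≤ k)
  have hR'c' : (R.card : ℝ) - 6 * k * (θ * n) ≤ R'.card := by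
    have q := mul_le_mul_of_nonneg_right hUc (show 0 ≤ 6 * θ * n by positivity)
    linarith
  have hR'big : 2 * k + 1 ≤ R'.card := by
    have : ((2 * k + 1 : ℕ) : ℝ) ≤ R'.card := by push_cast; linarith
    exact_mod_cast this
  obtain ⟨a, b, hab⟩ := one_edge hk G hG.1 v A R' hAc (fun a ha => (hAm a ha).2)
    (fun r hr => hR'adj r hr v (Finset.mem_insert_self _ _))
    (fun a ha r hr => hR'adj r hr a (Finset.mem_insert_of_mem ha)) hR'big
  have heR := inner_R_bound (k - 1) G R R' hR'R hdR a b hab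
  have hsd : ((R \ R').card : ℝ) ≤ 6 * k * (θ * n) := by
    have : ((R \ R').card : ℝ) + R'.card = R.card := by
      exact_mod_cast Finset.card_sdiff_add_card_eq_card hR'R
    linarith
  have hkc : ((k - 1 : ℕ) : ℝ) = k - 1 := by push_cast [show 1 ≤ k by omega]; ring
  have heR' : ∑ r ∈ R, (degIn G R r : ℝ) ≤ 2 + 12 * k ^ 2 * (θ * n) := by
    have h1 : ∑ r ∈ R, (degIn G R r : ℝ) ≤ 2 + 2 * ((k - 1 : ℕ) : ℝ) * (R \ R').card := by
      exact_mod_cast heR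
    rw [hkc] at h1
    have h2 : 2 * ((k : ℝ) - 1) * (R \ R').card ≤ 2 * k * (6 * k * (θ * n)) := by
      apply mul_le_mul (by linarith) hsd (by positivity) (by positivity)
    linarith
  have hcm := count_main hn0 G x (34 * θ) (by linarith) hx0 hx1 heig hlam hcut.1
  have hlb := lower_bound (by omega) hn0 G hG
  set M := ∑ v ∈ L, missN G R v with hM
  set D := ∑ v ∈ L, (k - 1 - degIn G L v) with hD
  have hMR : ∑ v ∈ L, (missN G R v : ℝ) = M := by rw [hM]; push_cast; rfl
  have hDR : ∑ v ∈ L, (degIn G L v : ℝ) = (k - 1) * L.card - D := by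
    have : D + ∑ v ∈ L, degIn G L v = (k - 1) * L.card := by
      rw [hD, ← Finset.sum_add_distrib, mul_comm, ← smul_eq_mul, ← Finset.sum_const]
      apply Finset.sum_congr rfl
      intro u hu
      have := hdL u hu
      omega
    have h2 : (D : ℝ) + ∑ v ∈ L, (degIn G L v : ℝ) = ((k - 1 : ℕ) : ℝ) * L.card := by
      exact_mod_cast this
    rw [hkc] at h2
    linarith
  rw [hMR, hDR] at hcm
  have hM0 : (0 : ℝ) ≤ M := by positivity
  have hD0 : (0 : ℝ) ≤ D := by positivity
  have hsq : 1 - 68 * θ ≤ (1 - 34 * θ) ^ 2 := by linarith [sq_nonneg θ]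
  have hsq1 : (1 - 34 * θ) ^ 2 ≤ 1 := by
    linarith [mul_le_mul_of_nonneg_left hθ1 hθ0.le]
  have e1 : ((k : ℝ) - 1) * n / 2 - 3 * k ^ 2 ≤ (lam1 G - n / 2) * n := by linarith
  have e2 : (1 - 68 * θ) * (((k : ℝ) - 1) * n / 2 - 3 * k ^ 2) ≤
      (1 - 34 * θ) ^ 2 * ((lam1 G - n / 2) * n) := by
    have hpos : 0 ≤ ((k : ℝ) - 1) * n / 2 - 3 * k ^ 2 := by
      have q1 : (2 : ℝ) * n ≤ (k - 1) * n := mul_le_mul_of_nonneg_right (by linarith) hnR.le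
      have q2 : 0 ≤ k * (θ * n) := by positivity
      linarith
    exact mul_le_mul hsq e1 hpos (by positivity)
  have e3 : (M : ℝ) ≤ 2 * (1 - 34 * θ) ^ 2 * M := by
    exact le_mul_of_one_le_left hM0 (by linarith)
  have e4 : ((k : ℝ) - 1) * L.card ≤ (k - 1) * (n / 2 + θ * n) :=
    mul_le_mul_of_nonneg_left hL2 (by linarith)
  have e5 : (M : ℝ) + D ≤ 25 * k ^ 2 * (θ * n) := by
    have f1 : (M : ℝ) + D ≤ (k - 1) * (n / 2 + θ * n) + (2 + 12 * k ^ 2 * (θ * n)) -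
      (1 - 68 * θ) * (((k : ℝ) - 1) * n / 2 - 3 * k ^ 2) := by linarith
    have f2 : (k - 1) * (n / 2 + θ * n) + (2 + 12 * k ^ 2 * (θ * n)) -
      (1 - 68 * θ) * (((k : ℝ) - 1) * n / 2 - 3 * k ^ 2) =
      35 * (k - 1) * (θ * n) + 12 * k ^ 2 * (θ * n) + 2 + 3 * k ^ 2 * (1 - 68 * θ) := by ring
    have f3 : 35 * ((k : ℝ) - 1) * (θ * n) ≤ 12 * k ^ 2 * (θ * n) :=
      mul_le_mul_of_nonneg_right (by linarith [mul_le_mul_of_nonneg_right hk' (show (0 : ℝ) ≤ k by linarith)]) hp.le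
    have f4 : 3 * (k : ℝ) ^ 2 * (1 - 68 * θ) ≤ 3 * k ^ 2 :=
      mul_le_of_le_one_right (by positivity) (by linarith)
    have f5 : 2 + 3 * (k : ℝ) ^ 2 ≤ k ^ 2 * (θ * n) := by
      have q1 : (9 : ℝ) ≤ (k : ℝ) ^ 2 := by
        have := pow_le_pow_left₀ (by norm_num) hk' 2
        norm_num at this
        exact this
      have q2 : (k : ℝ) ^ 2 * 5 ≤ k ^ 2 * (θ * n) :=
        mul_le_mul_of_nonneg_left (by linarith) (by positivity)
      linarith
    linarith
  have e6 : D + k * M < L.card := by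
    have : (D : ℝ) + k * M < L.card := by
      have g1 : (D : ℝ) + k * M ≤ k * (M + D) := by
        have : (1 : ℝ) * D ≤ k * D := mul_le_mul_of_nonneg_right (by linarith) hD0
        linarith
      have g2 : (k : ℝ) * (M + D) ≤ k * (25 * k ^ 2 * (θ * n)) :=
        mul_le_mul_of_nonneg_left e5 (by positivity)
      linarith
    exact_mod_cast this
  obtain ⟨v', hv'L, hv'd, hv'm, hv'n⟩ := exists_full (by omega) G L R hdL e6
  refine ⟨hn0, hdL, ?_, ?_, x, fun v => by linarith [hx0 v], hx1, heig⟩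
  · intro U hU hUc
    obtain ⟨C, hC, hadj, hcard⟩ := common_nbrs_bound G R U (6 * θ * n) (fun u hu => hmL u (hU hu))
    have hUc' : (U.card : ℝ) ≤ 2 * k := by exact_mod_cast hUc
    have : (0 : ℝ) < C.card := by
      have q := mul_le_mul_of_nonneg_right hUc' (show 0 ≤ 6 * θ * n by positivity)
      linarith
    obtain ⟨r, hr⟩ := Finset.card_pos.1 (by exact_mod_cast this : 0 < C.card)
    exact ⟨r, hC hr, fun u hu => hadj r hr u hu⟩
  · refine one_edge hk G hG.1 v' (L.filter fun u => G.Adj v' u) R (by rw [← hv'd, degIn_eq])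
      (fun a ha => (Finset.mem_filter.1 ha).2) (adj_of_miss_zero G R v' hv'm) ?_ ?_
    · intro u hu
      exact adj_of_miss_zero G R u (hv'n u (Finset.mem_filter.1 hu).1 (Finset.mem_filter.1 hu).2)
    · exact hR'big.trans (Finset.card_le_card hR'R)


/-- `l` is a path on `m` vertices of `G` inside `L`. -/
def IsP {n : ℕ} (G : SimpleGraph (Fin n)) (L : Finset (Fin n)) (m : ℕ) (l : List (Fin n)) : Prop :=
  l.length = m ∧ l.Nodup ∧ l.IsChain G.Adj ∧ ∀ x ∈ l, x ∈ L

lemma IsP.rev {n : ℕ} {G : SimpleGraph (Fin n)} {L : Finset (Fin n)} {m : ℕ} {l : List (Fin n)}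
    (h : IsP G L m l) : IsP G L m l.reverse := by
  obtain ⟨h1, h2, h3, h4⟩ := h
  refine ⟨by simpa using h1, by simpa using h2, ?_, by simpa using h4⟩
  rw [List.isChain_reverse]
  exact h3.imp fun a b h => h.symm

lemma mem_of_head? {α : Type*} {l : List α} {a : α} (h : l.head? = some a) : a ∈ l :=
  List.mem_of_head? h

lemma path_unique_nbr {n : ℕ} {G : SimpleGraph (Fin n)} {L : Finset (Fin n)} {m : ℕ}
    {u u1 : Fin n} {t : List (Fin n)} (hm : 3 ≤ m)
    (hE : ∀ l, IsP G L m l → l.head? = some u ∨ l.getLast? = some u)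
    (hl : IsP G L m (u :: u1 :: t)) (w : Fin n) (hw : w ∈ L) (huw : G.Adj u w) : w = u1 := by
  obtain ⟨h1, h2, h3, h4⟩ := hl
  by_contra hne
  obtain ⟨h5, h6⟩ := List.nodup_cons.1 h2
  have h7 : (u1 :: t).IsChain G.Adj := (List.isChain_cons.1 h3).2
  have huu1 : G.Adj u u1 := (List.isChain_cons.1 h3).1 u1 (by simp)
  by_cases hmem : w ∈ u1 :: t
  · have hwt : w ∈ t := by simpa [hne] using hmem
    obtain ⟨A, B, rfl⟩ := List.append_of_mem hwt
    have hA : (u1 :: A).IsChain G.Adj := by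
      have : ((u1 :: A) ++ (w :: B)).IsChain G.Adj := by simpa using h7
      exact this.left_of_append
    have hB : (w :: B).IsChain G.Adj := by
      have : ((u1 :: A) ++ (w :: B)).IsChain G.Adj := by simpa using h7
      exact this.right_of_append
    have hperm : List.Perm ((u1 :: A).reverse ++ u :: w :: B) (u :: u1 :: (A ++ w :: B)) := by
      refine (List.perm_append_comm).trans ?_
      rw [List.cons_append]
      refine List.Perm.cons _ ?_
      refine (List.Perm.append_left _ (List.reverse_perm _)).trans ?_
      exact List.perm_append_comm
    have hP : IsP G L m ((u1 :: A).reverse ++ u :: w :: B) := by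
      refine ⟨by rw [hperm.length_eq, h1], hperm.nodup_iff.2 h2, ?_, fun x hx => h4 x (hperm.mem_iff.1 hx)⟩
      refine List.IsChain.append ?_ ?_ ?_
      · rw [List.isChain_reverse]
        exact hA.imp fun a b h => h.symm
      · exact List.isChain_cons_cons.2 ⟨huw, hB⟩
      · intro x hx y hy
        simp at hx hy
        subst hx; subst hy
        exact huu1.symm
    rcases hE _ hP with h | h
    · apply h5
      rw [List.head?_append_of_ne_nil _ (by simp), List.head?_reverse] at h
      have := List.mem_of_getLast? h
      simp at this ⊢
      tauto
    · apply h5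
      rw [List.getLast?_append_of_ne_nil _ (by simp), List.getLast?_cons_cons] at h
      have := List.mem_of_getLast? h
      simp at this ⊢
      tauto
  · have ht : t ≠ [] := by
      rintro rfl
      simp at h1; omega
    have hwu : w ≠ u := huw.ne'
    have hP : IsP G L m (w :: u :: (u1 :: t).dropLast) := by
      refine ⟨?_, ?_, ?_, ?_⟩
      · simp at h1 ⊢; omega
      · rw [List.nodup_cons, List.nodup_cons]
        refine ⟨?_, ?_, h6.sublist (List.dropLast_sublist _)⟩
        · intro h
          rcases List.mem_cons.1 h with h | h
          · exact hwu h
          · exact hmem (List.mem_of_mem_dropLast h)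
        · intro h
          exact h5 (List.mem_of_mem_dropLast h)
      · rw [List.isChain_cons_cons]
        refine ⟨huw.symm, ?_⟩
        have := h3.dropLast
        rwa [List.dropLast_cons_of_ne_nil (by simp)] at this
      · intro x hx
        rcases List.mem_cons.1 hx with rfl | hx
        · exact hw
        · rcases List.mem_cons.1 hx with rfl | hx
          · exact h4 _ (by simp)
          · exact h4 _ (List.mem_cons_of_mem _ (List.mem_of_mem_dropLast hx))
    rcases hE _ hP with h | h
    · simp at h; exact hwu h
    · rw [List.getLast?_cons_cons] at h
      have hne' : (u1 :: t).dropLast ≠ [] := by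
        rw [List.dropLast_cons_of_ne_nil ht]; simp
      obtain ⟨y, s, hys⟩ := List.exists_cons_of_ne_nil hne'
      rw [hys, List.getLast?_cons_cons, ← hys] at h
      exact h5 (List.mem_of_mem_dropLast (List.mem_of_getLast? h))

/-- The modified graph: delete the pairs in `D`, add the pairs in `A`, and join `L` to its
complement completely. -/
def modG {n : ℕ} (G : SimpleGraph (Fin n)) (L : Finset (Fin n)) (D A : List (Fin n × Fin n)) :
    SimpleGraph (Fin n) where
  Adj x y := x ≠ y ∧ ((G.Adj x y ∧ (x, y) ∉ D ∧ (y, x) ∉ D) ∨ (x ∈ L ∧ y ∉ L) ∨ (x ∉ L ∧ y ∈ L) ∨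
    (x, y) ∈ A ∨ (y, x) ∈ A)
  symm := by
    constructor
    intro x y h
    refine ⟨h.1.symm, ?_⟩
    rcases h.2 with h | h | h | h | h
    · exact Or.inl ⟨h.1.symm, h.2.2, h.2.1⟩
    · tauto
    · tauto
    · tauto
    · tauto
  loopless := by
    constructor
    intro u h
    exact h.1 rfl

open Classical in
lemma mod_contra {n t : ℕ} (hn : 0 < n) (G : SimpleGraph (Fin n)) (hG : IsSpexWheel t G)
    (L : Finset (Fin n)) (x : Fin n → ℝ)
    (heig : ∀ u, ∑ v, (if G.Adj u v then x v else 0) = lam1 G * x u)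
    (hx0 : ∀ i, 19 / 20 ≤ x i) (hx1 : ∀ i, x i ≤ 1) (D A P : List (Fin n × Fin n))
    (hfree : WheelFree t (modG G L D A)) (hP : P.Nodup)
    (hP2 : ∀ q ∈ P, (modG G L D A).Adj q.1 q.2 ∧ ¬ G.Adj q.1 q.2)
    (hlen : 10 * (2 * D.length) < 9 * P.length) : False := by
  have h1 := hG.2 _ hfree
  refine absurd (swap_spec hn G (modG G L D A) x heig hx0 hx1 P.length (2 * D.length) ?_ ?_ hlen)
    (not_lt.2 h1)
  · rw [← List.toFinset_card_of_nodup hP]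
    apply Finset.card_le_card
    intro q hq
    exact Finset.mem_filter.2 ⟨Finset.mem_univ _, hP2 q (List.mem_toFinset.1 hq)⟩
  · have : (Finset.univ.filter fun q : Fin n × Fin n => G.Adj q.1 q.2 ∧ ¬ (modG G L D A).Adj q.1 q.2)
        ⊆ (D ++ D.map Prod.swap).toFinset := by
      rintro ⟨p, q⟩ hpq
      obtain ⟨-, h2, h3⟩ := Finset.mem_filter.1 hpq
      simp only at h2 h3
      rw [List.mem_toFinset, List.mem_append]
      by_contra hcon
      push Not at hcon
      apply h3
      refine ⟨h2.ne, Or.inl ⟨h2, hcon.1, ?_⟩⟩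
      intro h
      exact hcon.2 (List.mem_map.2 ⟨(q, p), h, rfl⟩)
    refine le_trans (Finset.card_le_card this) (le_trans (List.toFinset_card_le _) ?_)
    simp; omega

lemma noC {n k : ℕ} (hk : 2 ≤ k) (G : SimpleGraph (Fin n)) (hG : WheelFree (2 * k + 1) G)
    (L R : Finset (Fin n))
    (hcom : ∀ U ⊆ L, U.card ≤ 2 * k → ∃ r ∈ R, ∀ u ∈ U, G.Adj u r)
    (f : ZMod (2 * k) → Fin n) (hf : Function.Injective f) (hadj : ∀ i, G.Adj (f i) (f (i + 1)))
    (hL : ∀ i, f i ∈ L) : False := by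
  classical
  have : NeZero (2 * k) := ⟨by omega⟩
  obtain ⟨r, hr, hru⟩ := hcom (Finset.univ.image f) (by
    intro x hx
    obtain ⟨i, -, rfl⟩ := Finset.mem_image.1 hx
    exact hL i) (by
    refine Finset.card_image_le.trans ?_
    rw [Finset.card_univ, ZMod.card])
  have hcast : ∀ i j : ℕ, i < 2 * k → j < 2 * k → ((i : ℕ) : ZMod (2 * k)) = j → i = j := by
    intro i j hi hj h
    have := congrArg ZMod.val h
    rwa [ZMod.val_natCast_of_lt hi, ZMod.val_natCast_of_lt hj] at this
  refine hG (copy_of_list hk r ((List.range (2 * k)).map (fun j => f (j : ℕ))) (by simp) ?_ ?_ ?_ ?_)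
  · apply List.Nodup.map_on _ List.nodup_range
    intro x hx y hy hxy
    rw [List.mem_range] at hx hy
    exact hcast x y (by omega) (by omega) (hf hxy)
  · rw [List.isChain_map]
    obtain ⟨m, hm⟩ : ∃ m, 2 * k = m + 1 := ⟨2 * k - 1, by omega⟩
    have : ∀ j : ℕ, G.Adj (f (j : ℕ)) (f ((j + 1 : ℕ) : ZMod (2 * k))) := by
      intro j
      have := hadj (j : ℕ)
      push_cast
      exact this
    rw [List.isChain_iff_getElem]
    intro i hi
    simpa using this i
  · intro a ha b hb
    rw [List.getLast?_eq_getElem?, List.getElem?_eq_getElem (by simp; omega)] at ha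
    rw [List.head?_eq_getElem?, List.getElem?_eq_getElem (by simp; omega)] at hb
    simp only [Option.mem_def, Option.some.injEq, List.getElem_map, List.length_map,
      List.length_range, List.getElem_range] at ha hb
    subst ha hb
    have := hadj ((2 * k - 1 : ℕ) : ZMod (2 * k))
    have e : ((2 * k - 1 : ℕ) : ZMod (2 * k)) + 1 = ((0 : ℕ) : ZMod (2 * k)) := by
      have : ((2 * k - 1 + 1 : ℕ) : ZMod (2 * k)) = 0 := by
        rw [Nat.sub_add_cancel (by omega)]
        exact ZMod.natCast_self _
      push_cast at this ⊢
      exact this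
    rw [e] at this
    exact this
  · intro x hx
    obtain ⟨j, -, rfl⟩ := List.mem_map.1 hx
    exact (hru _ (Finset.mem_image.2 ⟨_, Finset.mem_univ _, rfl⟩)).symm

/-- A variant avoiding cycles in a modified graph. -/
lemma noC' {n k : ℕ} (hk : 2 ≤ k) (G G' : SimpleGraph (Fin n)) (L : Finset (Fin n)) (u : Fin n)
    (hE : ∀ l, IsP G L (2 * k - 1) l → l.head? = some u ∨ l.getLast? = some u)
    (h : ∀ x y, x ∈ L → y ∈ L → x ≠ u → y ≠ u → G'.Adj x y → G.Adj x y)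
    (f : ZMod (2 * k) → Fin n) (hf : Function.Injective f) (hadj : ∀ i, G'.Adj (f i) (f (i + 1)))
    (hL : ∀ i, f i ∈ L) : False := by
  obtain ⟨i0, hi0⟩ : ∃ i0, ∀ i, i ≠ i0 → f i ≠ u := by
    by_cases hex : ∃ i, f i = u
    · obtain ⟨i0, rfl⟩ := hex
      exact ⟨i0, fun i hi h => hi (hf h)⟩
    · push Not at hex
      exact ⟨0, fun i _ => hex i⟩
  obtain ⟨l, h1, h2, h3, h4⟩ := path_of_cyc hk f hf hadj i0
  have h5 : ∀ x ∈ l, x ∈ L ∧ x ≠ u := by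
    intro x hx
    obtain ⟨i, hi, rfl⟩ := h4 x hx
    exact ⟨hL i, hi0 i hi⟩
  have hP : IsP G L (2 * k - 1) l := by
    refine ⟨h1, h2, ?_, fun x hx => (h5 x hx).1⟩
    refine List.IsChain.imp_of_mem_imp ?_ h3
    intro x y hx hy hxy
    exact h x y (h5 x hx).1 (h5 y hy).1 (h5 x hx).2 (h5 y hy).2 hxy
  rcases hE l hP with h | h
  · exact (h5 u (List.mem_of_head? h)).2 rfl
  · exact (h5 u (List.mem_of_getLast? h)).2 rfl

lemma path_ends {n k : ℕ} (hk : 2 ≤ k) (G : SimpleGraph (Fin n)) (hG : WheelFree (2 * k + 1) G)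
    (L : Finset (Fin n)) (c d u : Fin n) (hcd : G.Adj c d) (hd : d ∉ L)
    (hcL : ∀ x ∈ L, G.Adj c x) (hdL : ∀ x ∈ L, x ≠ u → G.Adj d x) :
    ∀ l, IsP G L (2 * k - 1) l → l.head? = some u ∨ l.getLast? = some u := by
  intro l ⟨h1, h2, h3, h4⟩
  by_contra hcon
  push Not at hcon
  have hne : l ≠ [] := by rintro rfl; simp at h1; omega
  refine hG (copy_of_list hk c (d :: l) (by simp; omega) ?_ ?_ ?_ ?_)
  · exact List.nodup_cons.2 ⟨fun h => hd (h4 d h), h2⟩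
  · refine List.isChain_cons.2 ⟨?_, h3⟩
    intro y hy
    exact hdL y (h4 y (List.mem_of_head? hy)) (fun e => hcon.1 (e ▸ hy))
  · intro a ha b hb
    simp at hb
    subst hb
    obtain ⟨y, s, rfl⟩ := List.exists_cons_of_ne_nil hne
    rw [List.getLast?_cons_cons] at ha
    exact (hdL a (h4 a (List.mem_of_getLast? ha)) (fun e => hcon.2 (e ▸ ha))).symm
  · intro x hx
    rcases List.mem_cons.1 hx with rfl | hx
    · exact hcd
    · exact hcL x (h4 x hx)


lemma degIn_le_card {n : ℕ} (G' : SimpleGraph (Fin n)) (L S : Finset (Fin n)) (v : Fin n)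
    (h : ∀ y ∈ L, G'.Adj v y → y ∈ S) : degIn G' L v ≤ S.card := by
  classical
  rw [degIn_eq]
  apply Finset.card_le_card
  intro y hy
  exact h y (Finset.mem_filter.1 hy).1 (Finset.mem_filter.1 hy).2

lemma degIn_le_of_imp {n : ℕ} (G G' : SimpleGraph (Fin n)) (L : Finset (Fin n)) (v : Fin n)
    (h : ∀ y ∈ L, G'.Adj v y → G.Adj v y) : degIn G' L v ≤ degIn G L v := by
  classical
  rw [degIn_eq G]
  exact degIn_le_card G' L _ v fun y hy hvy => Finset.mem_filter.2 ⟨hy, h y hy hvy⟩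

lemma degIn_le_swap {n : ℕ} (G G' : SimpleGraph (Fin n)) (L : Finset (Fin n)) (v u q : Fin n)
    (hq : q ∈ L) (hvq : G.Adj v q)
    (h : ∀ y ∈ L, G'.Adj v y → y = u ∨ (G.Adj v y ∧ y ≠ q)) : degIn G' L v ≤ degIn G L v := by
  classical
  have h1 := degIn_le_card G' L (insert u ((L.filter fun y => G.Adj v y).erase q)) v (by
    intro y hy hvy
    rcases h y hy hvy with h | h
    · exact h ▸ Finset.mem_insert_self _ _
    · exact Finset.mem_insert_of_mem (Finset.mem_erase.2 ⟨h.2, Finset.mem_filter.2 ⟨hy, h.1⟩⟩))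
  have h2 : q ∈ L.filter fun y => G.Adj v y := Finset.mem_filter.2 ⟨hq, hvq⟩
  have h3 := Finset.card_insert_le u ((L.filter fun y => G.Adj v y).erase q)
  have h4 := Finset.card_erase_add_one h2
  rw [degIn_eq G]
  omega

set_option maxHeartbeats 800000 in
open Classical in
lemma final_contra {n k : ℕ} (hk : 3 ≤ k) (hn : 0 < n) (G : SimpleGraph (Fin n))
    (hG : IsSpexWheel (2 * k + 1) G) (L R : Finset (Fin n)) (hR : R = Lᶜ)
    (hdeg : ∀ v ∈ L, degIn G L v ≤ k - 1)
    (hcom : ∀ U ⊆ L, U.card ≤ 2 * k → ∃ r ∈ R, ∀ u ∈ U, G.Adj u r)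
    (hab : ∃ a b, ∀ x y, x ∈ R → y ∈ R → G.Adj x y → (x = a ∧ y = b) ∨ (x = b ∧ y = a))
    (x : Fin n → ℝ) (hx0 : ∀ v, 19 / 20 ≤ x v) (hx1 : ∀ v, x v ≤ 1)
    (heig : ∀ u, ∑ v, (if G.Adj u v then x v else 0) = lam1 G * x u)
    (u r : Fin n) (hu : u ∈ L) (hr : r ∈ R) (hur : ¬ G.Adj u r) : False := by
  have hRL : ∀ y, y ∈ R ↔ y ∉ L := by intro y; rw [hR, Finset.mem_compl]
  have hrL := (hRL r).1 hr
  have hne : u ≠ r := fun h => hrL (h ▸ hu)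
  have hru : ¬ G.Adj r u := fun h => hur h.symm
  obtain ⟨a, b, hab⟩ := hab
  -- internal adjacency with nothing added
  have hin : ∀ D y z, y ∈ L → z ∈ L → (modG G L D []).Adj y z → G.Adj y z := by
    intro D y z hy hz h
    rcases h.2 with h | h | h | h | h
    · exact h.1
    · exact absurd hz h.2
    · exact absurd hy h.1
    · simp at h
    · simp at h
  have hdeg' : ∀ D, ∀ v ∈ L, degIn (modG G L D []) L v ≤ k - 1 := by
    intro D v hv
    exact (degIn_le_of_imp G _ L v fun y hy h => hin D v y hv hy h).trans (hdeg v hv)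
  have hout : ∀ D A y z, (∀ q ∈ A, q.1 ∈ L ∧ q.2 ∈ L) → y ∉ L → z ∉ L → (modG G L D A).Adj y z →
      G.Adj y z ∧ (y, z) ∉ D ∧ (z, y) ∉ D := by
    intro D A y z hA hy hz h
    rcases h.2 with h | h | h | h | h
    · exact h
    · exact absurd h.1 hy
    · exact absurd h.2 hz
    · exact absurd (hA _ h).1 hy
    · exact absurd (hA _ h).1 hz
  have hcrossadd : ∀ D A, (modG G L D A).Adj u r := fun D A => ⟨hne, Or.inr (Or.inl ⟨hu, hrL⟩)⟩
  by_cases hE : ∃ a' ∈ R, ∃ b' ∈ R, G.Adj a' b'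
  swap
  · push Not at hE
    refine mod_contra hn G hG L x heig hx0 hx1 [] [] [(u, r)] ?_ (by simp) ?_ (by simp)
    · refine wheelfree_zero (by omega) _ L (hdeg' []) ?_ ?_
      · intro y z hy hz h
        exact hE y ((hRL y).2 hy) z ((hRL z).2 hz) (hout _ _ y z (by simp) hy hz h).1
      · intro f hf hadj hfL
        exact noC (by omega) G hG.1 L R hcom f hf
          (fun i => hin [] _ _ (hfL i) (hfL (i + 1)) (hadj i)) hfL
    · intro q hq
      simp only [List.mem_singleton] at hq
      subst hq
      exact ⟨hcrossadd _ _, hur⟩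
  have hab' : G.Adj a b ∧ a ∈ R ∧ b ∈ R := by
    obtain ⟨a', ha', b', hb', h⟩ := hE
    rcases hab a' b' ha' hb' h with ⟨rfl, rfl⟩ | ⟨rfl, rfl⟩
    · exact ⟨h, ha', hb'⟩
    · exact ⟨h.symm, hb', ha'⟩
  obtain ⟨habadj, haR, hbR⟩ := hab'
  have haL := (hRL a).1 haR
  have hbL := (hRL b).1 hbR
  have hzeroR : ∀ D A y z, (∀ q ∈ A, q.1 ∈ L ∧ q.2 ∈ L) → (a, b) ∈ D → y ∉ L → z ∉ L →
      ¬ (modG G L D A).Adj y z := by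
    intro D A y z hA hD hy hz h
    obtain ⟨h1, h2, h3⟩ := hout D A y z hA hy hz h
    rcases hab y z ((hRL y).2 hy) ((hRL z).2 hz) h1 with ⟨rfl, rfl⟩ | ⟨rfl, rfl⟩
    · exact h2 hD
    · exact h3 hD
  by_cases hpath : ∃ l, IsP G L (2 * k - 1) l
  swap
  · push Not at hpath
    refine mod_contra hn G hG L x heig hx0 hx1 [] [] [(u, r)] ?_ (by simp) ?_ (by simp)
    · refine wheelfree_one (by omega) _ L a b (hdeg' []) ?_ ?_
      · intro y z hy hz h
        exact hab y z ((hRL y).2 hy) ((hRL z).2 hz) (hout _ _ y z (by simp) hy hz h).1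
      · intro l h1 h2 h3 h4
        refine hpath l ⟨h1, h2, ?_, h4⟩
        refine List.IsChain.imp_of_mem_imp ?_ h3
        intro y z hy hz h
        exact hin [] y z (h4 y hy) (h4 z hz) h
    · intro q hq
      simp only [List.mem_singleton] at hq
      subst hq
      exact ⟨hcrossadd _ _, hur⟩
  by_cases htwo : ∃ u' ∈ L, ∃ r' ∈ R, ¬ G.Adj u' r' ∧ (u', r') ≠ (u, r)
  · obtain ⟨u', hu', r', hr', hur', hne'⟩ := htwo
    have hrL' := (hRL r').1 hr'
    have hn1 : u' ≠ r' := fun h => hrL' (h ▸ hu')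
    have hn2 : u' ≠ r := fun h => hrL (h ▸ hu')
    refine mod_contra hn G hG L x heig hx0 hx1 [(a, b)] [] [(u, r), (r, u), (u', r')] ?_ ?_ ?_
      (by simp)
    · refine wheelfree_zero (by omega) _ L (hdeg' _) ?_ ?_
      · intro y z hy hz
        exact hzeroR _ _ y z (by simp) (by simp) hy hz
      · intro f hf hadj hfL
        exact noC (by omega) G hG.1 L R hcom f hf
          (fun i => hin _ _ _ (hfL i) (hfL (i + 1)) (hadj i)) hfL
    · rw [List.nodup_cons, List.nodup_cons]
      refine ⟨?_, ?_, List.nodup_singleton _⟩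
      · intro h
        rcases List.mem_cons.1 h with h | h
        · exact hne (Prod.mk.inj h).1
        · exact hne' (List.mem_singleton.1 h).symm
      · intro h
        exact hn2 (Prod.mk.inj (List.mem_singleton.1 h)).1.symm
    · intro q hq
      simp only [List.mem_cons, List.not_mem_nil, or_false] at hq
      rcases hq with rfl | rfl | rfl
      · exact ⟨hcrossadd _ _, hur⟩
      · exact ⟨(hcrossadd _ _).symm, hru⟩
      · exact ⟨⟨hn1, Or.inr (Or.inl ⟨hu', hrL'⟩)⟩, hur'⟩
  push Not at htwo
  have hfull : ∀ y ∈ L, ∀ z ∈ R, (y ≠ u ∨ z ≠ r) → G.Adj y z := by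
    intro y hy z hz hyz
    by_contra h
    have := htwo y hy z hz h
    rw [Prod.mk.injEq] at this
    rcases hyz with g | g
    · exact g this.1
    · exact g this.2
  have hends : ∀ l, IsP G L (2 * k - 1) l → l.head? = some u ∨ l.getLast? = some u := by
    by_cases har : a = r
    · have hbr : b ≠ r := fun h => habadj.ne (har.trans h.symm)
      exact path_ends (by omega) G hG.1 L b a u habadj.symm haL
        (fun y hy => (hfull y hy b hbR (Or.inr hbr)).symm)
        (fun y hy hyu => (hfull y hy a haR (Or.inl hyu)).symm)
    · exact path_ends (by omega) G hG.1 L a b u habadj hbL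
        (fun y hy => (hfull y hy a haR (Or.inr har)).symm)
        (fun y hy hyu => (hfull y hy b hbR (Or.inl hyu)).symm)
  obtain ⟨l, hl, hlh⟩ : ∃ l, IsP G L (2 * k - 1) l ∧ l.head? = some u := by
    obtain ⟨l, hl⟩ := hpath
    rcases hends l hl with h | h
    · exact ⟨l, hl, h⟩
    · exact ⟨l.reverse, hl.rev, by rw [List.head?_reverse, h]⟩
  have hlen := hl.1
  match l, hl, hlh, hlen with
  | [], _, _, hlen => simp at hlen; omega
  | [_], _, _, hlen => simp at hlen; omega
  | [_, _], _, _, hlen => simp at hlen; omega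
  | [_, _, _], _, _, hlen => simp at hlen; omega
  | w :: u1 :: p :: q :: t, hl, hlh, hlen =>
    simp only [List.head?_cons, Option.some.injEq] at hlh
    subst hlh
    have hun := path_unique_nbr (by omega) hends hl
    obtain ⟨-, hnd, hch, hmem⟩ := hl
    have hu1L : u1 ∈ L := hmem u1 (by simp)
    have hpL : p ∈ L := hmem p (by simp)
    have hqL : q ∈ L := hmem q (by simp)
    simp only [List.isChain_cons_cons] at hch
    obtain ⟨c1, c2, c3, c4⟩ := hch
    simp only [List.nodup_cons, List.mem_cons, not_or] at hnd
    obtain ⟨⟨d1, d2, d3, d4⟩, ⟨d5, d6, d7⟩, ⟨d8, d9⟩, d10, d11⟩ := hnd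
    by_cases hk4 : 4 ≤ k
    · have nwp : ¬ G.Adj w p := fun h => d5 (hun p hpL h).symm
      have nwq : ¬ G.Adj w q := fun h => d6 (hun q hqL h).symm
      have npw : ¬ G.Adj p w := fun h => nwp h.symm
      have nqw : ¬ G.Adj q w := fun h => nwq h.symm
      have hwA : ∀ s ∈ [(w, p), (w, q)], s.1 ∈ L ∧ s.2 ∈ L := by simp [hu, hpL, hqL]
      set G' := modG G L [(a, b), (p, q)] [(w, p), (w, q)] with hG'
      have hin' : ∀ y z, y ∈ L → z ∈ L → G'.Adj y z →
          (G.Adj y z ∧ ¬ (y = p ∧ z = q) ∧ ¬ (y = q ∧ z = p)) ∨ (y = w ∧ (z = p ∨ z = q)) ∨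
            (z = w ∧ (y = p ∨ y = q)) := by
        intro y z hy hz h
        have h2 := h.2
        simp only [List.mem_cons, Prod.mk.injEq, List.not_mem_nil, or_false, not_or] at h2
        rcases h2 with h2 | h2 | h2 | h2 | h2
        · exact Or.inl ⟨h2.1, h2.2.1.2, fun g => h2.2.2.2 ⟨g.2, g.1⟩⟩
        · exact absurd hz h2.2
        · exact absurd hy h2.1
        · rcases h2 with h2 | h2
          · exact Or.inr (Or.inl ⟨h2.1, Or.inl h2.2⟩)
          · exact Or.inr (Or.inl ⟨h2.1, Or.inr h2.2⟩)
        · rcases h2 with h2 | h2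
          · exact Or.inr (Or.inr ⟨h2.1, Or.inl h2.2⟩)
          · exact Or.inr (Or.inr ⟨h2.1, Or.inr h2.2⟩)
      refine mod_contra hn G hG L x heig hx0 hx1 [(a, b), (p, q)] [(w, p), (w, q)]
        [(w, r), (r, w), (w, p), (p, w), (w, q), (q, w)] ?_ ?_ ?_ (by simp)
      · refine wheelfree_zero (by omega) _ L ?_ ?_ ?_
        · intro v hv
          by_cases v1 : v = w
          · subst v1
            refine (degIn_le_card _ L {u1, p, q} v ?_).trans (Finset.card_le_three.trans (by omega))
            intro y hy h
            simp only [Finset.mem_insert, Finset.mem_singleton]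
            rcases hin' v y hv hy h with h | h | h
            · exact Or.inl (hun y hy h.1)
            · exact Or.inr h.2
            · rcases h.2 with h | h
              · exact absurd h d2
              · exact absurd h d3
          by_cases v2 : v = p
          · subst v2
            refine (degIn_le_swap G _ L v w q hqL c3 ?_).trans (hdeg v hv)
            intro y hy h
            rcases hin' v y hv hy h with h | h | h
            · exact Or.inr ⟨h.1, fun g => h.2.1 ⟨rfl, g⟩⟩
            · exact absurd h.1 v1
            · exact Or.inl h.1
          by_cases v3 : v = q
          · subst v3
            refine (degIn_le_swap G _ L v w p hpL c3.symm ?_).trans (hdeg v hv)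
            intro y hy h
            rcases hin' v y hv hy h with h | h | h
            · exact Or.inr ⟨h.1, fun g => h.2.2 ⟨rfl, g⟩⟩
            · exact absurd h.1 v1
            · exact Or.inl h.1
          refine (degIn_le_of_imp G _ L v ?_).trans (hdeg v hv)
          intro y hy h
          rcases hin' v y hv hy h with h | h | h
          · exact h.1
          · exact absurd h.1 v1
          · rcases h.2 with g | g
            · exact absurd g v2
            · exact absurd g v3
        · intro y z hy hz
          exact hzeroR _ _ y z hwA (by simp) hy hz
        · refine noC' (by omega) G _ L w hends ?_
          intro y z hy hz hyw hzw h
          rcases hin' y z hy hz h with h | h | h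
          · exact h.1
          · exact absurd h.1 hyw
          · exact absurd h.1 hzw
      · have e1 : p ≠ r := fun h => hrL (h ▸ hpL)
        have e2 : q ≠ r := fun h => hrL (h ▸ hqL)
        simp [hne, hne.symm, d2, d3, d8, e1, e2, e1.symm, e2.symm, Ne.symm d2, Ne.symm d3, Ne.symm d8]
      · intro s hs
        simp only [List.mem_cons, List.not_mem_nil, or_false] at hs
        have a1 : G'.Adj w p := ⟨d2, by simp⟩
        have a2 : G'.Adj w q := ⟨d3, by simp⟩
        rcases hs with rfl | rfl | rfl | rfl | rfl | rfl
        · exact ⟨hcrossadd _ _, hur⟩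
        · exact ⟨(hcrossadd _ _).symm, hru⟩
        · exact ⟨a1, nwp⟩
        · exact ⟨a1.symm, npw⟩
        · exact ⟨a2, nwq⟩
        · exact ⟨a2.symm, nqw⟩
    · obtain rfl : k = 3 := by omega
      obtain ⟨e, rfl⟩ : ∃ e, t = [e] := by
        apply List.length_eq_one_iff.1
        simp at hlen
        omega
      have heL : e ∈ L := hmem e (by simp)
      simp only [List.mem_singleton, List.isChain_cons_cons, List.isChain_singleton, and_true] at *
      have nwe : ¬ G.Adj w e := fun h => d7 (hun e heL h).symm
      have new : ¬ G.Adj e w := fun h => nwe h.symm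
      -- internal degrees are at most two
      have two : ∀ v y1 y2 y3, v ∈ L → y1 ∈ L → y2 ∈ L → y3 ∈ L → G.Adj v y1 → G.Adj v y2 →
          G.Adj v y3 → y1 ≠ y2 → y1 ≠ y3 → y2 ≠ y3 → False := by
        intro v y1 y2 y3 hv h1 h2 h3 g1 g2 g3 n1 n2 n3
        have h := hdeg v hv
        rw [degIn_eq] at h
        have hs : ({y1, y2, y3} : Finset (Fin n)) ⊆ L.filter fun y => G.Adj v y := by
          intro y hy
          simp only [Finset.mem_insert, Finset.mem_singleton] at hy
          rcases hy with rfl | rfl | rfl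
          · exact Finset.mem_filter.2 ⟨h1, g1⟩
          · exact Finset.mem_filter.2 ⟨h2, g2⟩
          · exact Finset.mem_filter.2 ⟨h3, g3⟩
        have hc := Finset.card_le_card hs
        rw [Finset.card_eq_three.2 ⟨y1, y2, y3, n1, n2, n3, rfl⟩] at hc
        omega
      have hen : ∀ y ∈ L, G.Adj e y → y = q := by
        intro y hy hey
        by_contra hyq
        have y0 : y ≠ w := fun h => new (h ▸ hey)
        have y1 : y ≠ u1 := by
          intro h
          subst h
          exact two y w p e hu1L hu hpL heL c1.symm c2 hey.symm d2 d4 d9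
        have y2 : y ≠ p := by
          intro h
          subst h
          exact two y u1 q e hpL hu1L hqL heL c2.symm c3 hey.symm d6 d7 d10
        have hP : IsP G L (2 * 3 - 1) [u1, p, q, e, y] := by
          refine ⟨by simp, ?_, ?_, ?_⟩
          · simp [d5, d6, d7, d8, d9, d10, Ne.symm y1, Ne.symm y2, Ne.symm hyq, hey.ne]
          · simp [c2, c3, c4, hey]
          · simp [hu1L, hpL, hqL, heL, hy]
        rcases hends _ hP with h | h
        · simp at h; exact d1 h.symm
        · simp at h; exact y0 h
      have hwA : ∀ s ∈ [(w, e)], s.1 ∈ L ∧ s.2 ∈ L := by simp [hu, heL]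
      set G' := modG G L [(a, b)] [(w, e)] with hG'
      have hin' : ∀ y z, y ∈ L → z ∈ L → G'.Adj y z →
          G.Adj y z ∨ (y = w ∧ z = e) ∨ (z = w ∧ y = e) := by
        intro y z hy hz h
        have h2 := h.2
        simp only [List.mem_cons, Prod.mk.injEq, List.not_mem_nil, or_false] at h2
        rcases h2 with h2 | h2 | h2 | h2 | h2
        · exact Or.inl h2.1
        · exact absurd hz h2.2
        · exact absurd hy h2.1
        · exact Or.inr (Or.inl h2)
        · exact Or.inr (Or.inr h2)
      refine mod_contra hn G hG L x heig hx0 hx1 [(a, b)] [(w, e)]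
        [(w, r), (r, w), (w, e), (e, w)] ?_ ?_ ?_ (by simp)
      · refine wheelfree_zero (by omega) _ L ?_ ?_ ?_
        · intro v hv
          by_cases v1 : v = w
          · subst v1
            refine (degIn_le_card _ L {u1, e} v ?_).trans (Finset.card_le_two.trans (by omega))
            intro y hy h
            simp only [Finset.mem_insert, Finset.mem_singleton]
            rcases hin' v y hv hy h with h | h | h
            · exact Or.inl (hun y hy h)
            · exact Or.inr h.2
            · exact absurd h.2 d4
          by_cases v2 : v = e
          · subst v2
            refine (degIn_le_card _ L {q, w} v ?_).trans (Finset.card_le_two.trans (by omega))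
            intro y hy h
            simp only [Finset.mem_insert, Finset.mem_singleton]
            rcases hin' v y hv hy h with h | h | h
            · exact Or.inl (hen y hy h)
            · exact absurd h.1 v1
            · exact Or.inr h.1
          refine (degIn_le_of_imp G _ L v ?_).trans (hdeg v hv)
          intro y hy h
          rcases hin' v y hv hy h with h | h | h
          · exact h
          · exact absurd h.1 v1
          · exact absurd h.2 v2
        · intro y z hy hz
          exact hzeroR _ _ y z hwA (by simp) hy hz
        · refine noC' (by omega) G _ L w hends ?_
          intro y z hy hz hyw hzw h
          rcases hin' y z hy hz h with h | h | h
          · exact h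
          · exact absurd h.1 hyw
          · exact absurd h.1 hzw
      · have e1 : e ≠ r := fun h => hrL (h ▸ heL)
        simp [hne, hne.symm, d4, e1, e1.symm, Ne.symm d4]
      · intro s hs
        simp only [List.mem_cons, List.not_mem_nil, or_false] at hs
        have a1 : G'.Adj w e := ⟨d4, by simp⟩
        rcases hs with rfl | rfl | rfl | rfl
        · exact ⟨hcrossadd _ _, hur⟩
        · exact ⟨(hcrossadd _ _).symm, hru⟩
        · exact ⟨a1, nwe⟩
        · exact ⟨a1.symm, new⟩

/-- If `L` has a vertex of internal degree `k - 1`, then every vertex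
of `L` is adjacent to every vertex of `R`. -/
theorem complete_between_parts (k : ℕ) (hk : 3 ≤ k) (hk4 : k ≠ 4) (hk5 : k ≠ 5) :
    ∃ N : ℕ, ∀ n : ℕ, N ≤ n → ∀ G : SimpleGraph (Fin n), IsSpexWheel (2 * k + 1) G →
      ∀ L R : Finset (Fin n), IsMaxCut G L R →
        (∃ v ∈ L, degIn G L v = k - 1) →
        ∀ u ∈ L, ∀ v ∈ R, G.Adj u v := by
  classical
  obtain ⟨N, hN⟩ := main_structure k hk
  refine ⟨N, ?_⟩
  intro n hn G hG L R hcut hv u hu r hr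
  obtain ⟨hn0, hdeg, hcom, hab, x, hx0, hx1, heig⟩ := hN n hn G hG L R hcut hv
  by_contra hur
  exact final_contra hk hn0 G hG L R hcut.1 hdeg hcom hab x hx0 hx1 (by convert heig) u r hu hr hur
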